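/- Let Q be a hereditary graph class, let 1 ≤ r < ∞, and let W ∈ Q̂ be a graphon whose randomness support graphon 1_{rand(W)} is not K_r-free. Then there exists s ∈ {0,1,…,r} such that W^{(r,s)} ∈ Q̂. -/

import Mathlib

open MeasureTheory Set Filter

noncomputable section

/-- A graphon: a symmetric measurable function `ℝ → ℝ → ℝ` with values in `[0,1]`
(only its values on `[0,1]²` matter). -/
def IsGraphon (W : ℝ → ℝ → ℝ) : Prop :=
  (∀ x y, W x y = W y x) ∧ Measurable (Function.uncurry W) ∧
    ∀ x y, W x y ∈ Set.Icc (0 : ℝ) 1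

/-- The cut norm `‖U‖_□`, the supremum over measurable `S, T ⊆ [0,1]` of
`|∫_{S×T} U|`. -/
def cutNorm (U : ℝ → ℝ → ℝ) : ℝ :=
  sSup { r : ℝ | ∃ S T : Set ℝ, MeasurableSet S ∧ MeasurableSet T ∧
    S ⊆ Set.Icc 0 1 ∧ T ⊆ Set.Icc 0 1 ∧
    r = |∫ p in S ×ˢ T, U p.1 p.2| }

/-- `d_□(W₁, W₂) = ‖W₁ - W₂‖_□`. -/
def dCut (W₁ W₂ : ℝ → ℝ → ℝ) : ℝ := cutNorm (fun x y => W₁ x y - W₂ x y)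

/-- A Lebesgue-measure-preserving map `[0,1] → [0,1]`. -/
def IsMPSelf (σ : ℝ → ℝ) : Prop :=
  MeasureTheory.MeasurePreserving σ
      (MeasureTheory.volume.restrict (Set.Icc (0:ℝ) 1))
      (MeasureTheory.volume.restrict (Set.Icc (0:ℝ) 1)) ∧
    Set.MapsTo σ (Set.Icc (0:ℝ) 1) (Set.Icc (0:ℝ) 1)

/-- The cut distance `δ_□(W₁, W₂)`. -/
def deltaCut (W₁ W₂ : ℝ → ℝ → ℝ) : ℝ :=
  sInf { r : ℝ | ∃ σ₁ σ₂ : ℝ → ℝ, IsMPSelf σ₁ ∧ IsMPSelf σ₂ ∧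
    r = cutNorm (fun x y => W₁ (σ₁ x) (σ₁ y) - W₂ (σ₂ x) (σ₂ y)) }

/-- The binary entropy function `h` (base-2 logarithm; `logb 2 0 = 0` by convention,
so `h 0 = h 1 = 0`). -/
def binEnt (x : ℝ) : ℝ := -x * Real.logb 2 x - (1 - x) * Real.logb 2 (1 - x)

/-- `h̃ x = h (min x (1/2))`. -/
def htilde (x : ℝ) : ℝ := binEnt (min x (1/2))

/-- The entropy `Ent(W) = ∫₀¹∫₀¹ h(W(x,y)) dx dy` of a graphon. -/
def graphonEnt (W : ℝ → ℝ → ℝ) : ℝ :=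
  ∫ x in Set.Icc (0:ℝ) 1, ∫ y in Set.Icc (0:ℝ) 1, binEnt (W x y)

open Classical in
/-- The graphon `W_G` of a simple graph `G` on `{1, …, n}` (vertices as `Fin n`,
vertex `i : Fin n` representing `i+1`): `W_G x y = 1` iff `⌈nx⌉⌈ny⌉ ∈ E(G)`. -/
def graphonOfGraph {n : ℕ} (G : SimpleGraph (Fin n)) : ℝ → ℝ → ℝ := fun x y =>
  if ∃ i j : Fin n, G.Adj i j ∧ ⌈(n : ℝ) * x⌉ = ((i : ℕ) : ℤ) + 1 ∧
      ⌈(n : ℝ) * y⌉ = ((j : ℕ) : ℤ) + 1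
  then 1 else 0

/-- A labelled graph class: a set of graphs on `{1,…,n}` for each `n`. -/
abbrev GraphClass := ∀ n : ℕ, Set (SimpleGraph (Fin n))

/-- A graph class is closed under relabelling by permutations. -/
def IsGraphClass (Q : GraphClass) : Prop :=
  ∀ (n : ℕ) (π : Equiv.Perm (Fin n)) (G : SimpleGraph (Fin n)),
    G ∈ Q n → G.comap ⇑π ∈ Q n

/-- A hereditary graph class: a graph class closed under taking induced subgraphs
(relabelled by the order-preserving bijection). -/
def IsHereditary (Q : GraphClass) : Prop :=
  IsGraphClass Q ∧
    ∀ (m n : ℕ) (f : Fin m → Fin n), StrictMono f →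
      ∀ G ∈ Q n, G.comap f ∈ Q m

/-- `Q̂`: the set of graphons which are limits (in cut distance) of sequences of graphs in
the class `Q` whose orders tend to infinity. -/
def limitSet (Q : GraphClass) : Set (ℝ → ℝ → ℝ) :=
  { W | IsGraphon W ∧
    ∃ (nk : ℕ → ℕ) (Gk : ∀ k, SimpleGraph (Fin (nk k))),
      (∀ k, Gk k ∈ Q (nk k)) ∧ Filter.Tendsto nk Filter.atTop Filter.atTop ∧
      Filter.Tendsto (fun k => deltaCut (graphonOfGraph (Gk k)) W) Filter.atTop (nhds 0) }

/-- `C(n,2) = n(n-1)/2` as a real number. -/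
def choose2 (n : ℕ) : ℝ := (n : ℝ) * ((n : ℝ) - 1) / 2

open Classical in
/-- The step function `E[W | P]` obtained by averaging `W` over the products of the
parts of the partition `P` of `[0,1]`. -/
def condExpPart {k : ℕ} (P : Fin k → Set ℝ) (W : ℝ → ℝ → ℝ) : ℝ → ℝ → ℝ := fun x y =>
  ∑ i : Fin k, ∑ j : Fin k,
    if x ∈ P i ∧ y ∈ P j then ⨍ p in (P i) ×ˢ (P j), W p.1 p.2 else 0

/-- `W̄_n`: the step function of `W` for the partition of `[0,1]` into `n` consecutive
intervals of length `1/n`. -/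
def barStep (n : ℕ) (W : ℝ → ℝ → ℝ) : ℝ → ℝ → ℝ :=
  condExpPart (fun i : Fin n => Set.Ioc (((i : ℕ) : ℝ)/n) ((((i : ℕ) : ℝ) + 1)/n)) W

/-- `N̂_□(n, δ; W)`: the number of graphs `G` on `{1,…,n}` with `d_□(W_G, W) ≤ δ`. -/
def NhatCut (n : ℕ) (δ : ℝ) (W : ℝ → ℝ → ℝ) : ℕ :=
  Nat.card {G : SimpleGraph (Fin n) // dCut (graphonOfGraph G) W ≤ δ}

/-- `N_□(n, δ; W)`: the number of graphs `G` on `{1,…,n}` with `δ_□(W_G, W) ≤ δ`. -/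
def NCut (n : ℕ) (δ : ℝ) (W : ℝ → ℝ → ℝ) : ℕ :=
  Nat.card {G : SimpleGraph (Fin n) // deltaCut (graphonOfGraph G) W ≤ δ}

open Classical in
/-- The induced density `p(F; W)` of a graph `F` on `{1,…,k}` in a graphon `W`. -/
def inducedDensity {k : ℕ} (F : SimpleGraph (Fin k)) (W : ℝ → ℝ → ℝ) : ℝ :=
  ∫ x : Fin k → ℝ in Set.univ.pi (fun _ : Fin k => Set.Icc (0:ℝ) 1),
    ∏ i : Fin k, ∏ j : Fin k,
      if i < j then (if F.Adj i j then W (x i) (x j) else 1 - W (x i) (x j)) else 1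

open Classical in
/-- The randomness support graphon `1_{rand(W)}` of `W`. -/
def randIndicator (W : ℝ → ℝ → ℝ) : ℝ → ℝ → ℝ := fun x y =>
  if 0 < W x y ∧ W x y < 1 then 1 else 0

/-- A kernel `U` is `K_r`-free if `∏_{i<j} U(x_i, x_j) = 0` for a.e. `x ∈ [0,1]^r`. -/
def KFree (r : ℕ) (U : ℝ → ℝ → ℝ) : Prop :=
  ∀ᵐ x ∂(MeasureTheory.volume.restrict (Set.univ.pi fun _ : Fin r => Set.Icc (0:ℝ) 1)),
    (∏ i : Fin r, ∏ j : Fin r, if i < j then U (x i) (x j) else 1) = 0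

open Classical in
/-- The graphon `W^{(r,s)}`: equal to `1/2` off the diagonal blocks, `1` on the first `s`
diagonal blocks `I_i × I_i`, and `0` on the remaining diagonal blocks. -/
def Wrs (r s : ℕ) : ℝ → ℝ → ℝ := fun x y =>
  if ∃ i j : Fin r, i ≠ j ∧ x ∈ Set.Ioc (((i:ℕ):ℝ)/r) ((((i:ℕ):ℝ)+1)/r) ∧
      y ∈ Set.Ioc (((j:ℕ):ℝ)/r) ((((j:ℕ):ℝ)+1)/r)
  then 1/2
  else if ∃ i : Fin r, (i:ℕ) < s ∧ x ∈ Set.Ioc (((i:ℕ):ℝ)/r) ((((i:ℕ):ℝ)+1)/r) ∧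
      y ∈ Set.Ioc (((i:ℕ):ℝ)/r) ((((i:ℕ):ℝ)+1)/r)
  then 1 else 0

/-- `E_r = ⋃_{i ≠ j} I_i × I_j` where `I_i`, `i = 1, …, r`, are the consecutive
intervals of length `1/r` in `[0,1]`. -/
def Er (r : ℕ) : Set (ℝ × ℝ) :=
  ⋃ (i : Fin r) (j : Fin r) (_ : i ≠ j),
    (Set.Ioc (((i:ℕ):ℝ)/r) ((((i:ℕ):ℝ)+1)/r)) ×ˢ (Set.Ioc (((j:ℕ):ℝ)/r) ((((j:ℕ):ℝ)+1)/r))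

/-- `R_r`: the set of graphons equal to `1/2` on `E_r` and `{0,1}`-valued elsewhere
on `[0,1]²`. -/
def Rset (r : ℕ) : Set (ℝ → ℝ → ℝ) :=
  { W | IsGraphon W ∧ (∀ p ∈ Er r, W p.1 p.2 = 1/2) ∧
      ∀ p ∈ ((Set.Icc (0:ℝ) 1) ×ˢ (Set.Icc (0:ℝ) 1)) \ Er r,
        W p.1 p.2 = 0 ∨ W p.1 p.2 = 1 }

/-- A graphon is random-free if it is `{0,1}`-valued a.e. on `[0,1]²`. -/
def IsRandomFree (W : ℝ → ℝ → ℝ) : Prop :=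
  ∀ᵐ p ∂(MeasureTheory.volume.restrict ((Set.Icc (0:ℝ) 1) ×ˢ (Set.Icc (0:ℝ) 1))),
    W (Prod.fst p) (Prod.snd p) = 0 ∨ W (Prod.fst p) (Prod.snd p) = 1

/-!
The induced densities of `W` are limits of those of graphs in `Q`. Hence, for almost every choice of
points, every graph on them which has an edge where `W = 1` and a non-edge where `W = 0` is an
induced subgraph of a graph in `Q`. If `1_{rand(W)}` is not `K_r`-free, points can be sampled in `r`
parts so that all pairs in different parts lie in `rand(W)`; the edges between different parts are
then arbitrary. Ramsey's theorem makes each part a clique or an independent set. Prescribing between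
the parts a graph read off from a symmetric Hadamard matrix `A` of order `N` gives graphs whose
difference to `W^{(r,s)}` consists, up to the diagonal, of blocks `± A / 2`. Since `‖A‖ = √N`, this
difference has cut norm `O(1 / √N)`. Finally, one value of `s` occurs for infinitely many `N`.
-/

section Ramsey

universe u

variable {V : Type u} {G : SimpleGraph V}

theorem exists_isNClique_succ {s t : Finset V} {v : V} {n : ℕ} [DecidablePred (G.Adj v)]
    (hv : v ∈ s) (ht : t ⊆ s.filter (G.Adj v)) (hclique : G.IsNClique n t) :
    ∃ t' ⊆ s, G.IsNClique (n + 1) t' := by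
  classical
  exact ⟨insert v t, Finset.insert_subset hv (ht.trans (Finset.filter_subset _ s)),
    hclique.insert fun w hw => (Finset.mem_filter.1 (ht hw)).2⟩

open Classical in
theorem card_filter_adj_add_card_filter_compl_adj (G : SimpleGraph V) {s : Finset V} {v : V}
    (hv : v ∈ s) : (s.filter (G.Adj v)).card + (s.filter (Gᶜ.Adj v)).card + 1 = s.card := by
  have hG : s.filter (G.Adj v) = (s.erase v).filter (G.Adj v) := by
    rw [Finset.filter_erase, Finset.erase_eq_of_notMem (by simp)]
  have hGc : s.filter (Gᶜ.Adj v) = (s.erase v).filter fun w => ¬G.Adj v w := by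
    ext w
    simp only [Finset.mem_filter, Finset.mem_erase, SimpleGraph.compl_adj, ne_comm (a := v)]
    tauto
  rw [hG, hGc, Finset.card_filter_add_card_filter_not, Finset.card_erase_add_one hv]

theorem exists_isNClique_or_compl_isNClique (a b : ℕ) :
    ∃ N : ℕ, ∀ {V : Type u} (G : SimpleGraph V) (s : Finset V), N ≤ s.card →
      (∃ t ⊆ s, G.IsNClique a t) ∨ ∃ t ⊆ s, Gᶜ.IsNClique b t := by
  classical
  induction a generalizing b with
  | zero => exact ⟨0, fun _ s _ => .inl ⟨∅, s.empty_subset, by simp⟩⟩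
  | succ a iha =>
    induction b with
    | zero => exact ⟨0, fun _ s _ => .inr ⟨∅, s.empty_subset, by simp⟩⟩
    | succ b ihb =>
      obtain ⟨N₁, hN₁⟩ := iha (b + 1)
      obtain ⟨N₂, hN₂⟩ := ihb
      refine ⟨N₁ + N₂ + 1, fun G s hs => ?_⟩
      obtain ⟨v, hv⟩ : s.Nonempty := Finset.card_pos.1 (by omega)
      have hcard := card_filter_adj_add_card_filter_compl_adj G hv
      by_cases hN : N₁ ≤ (s.filter (G.Adj v)).card
      · obtain ⟨t, ht, hclique⟩ | ⟨t, ht, hclique⟩ := hN₁ G _ hN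
        · exact .inl (exists_isNClique_succ hv ht hclique)
        · exact .inr ⟨t, ht.trans (Finset.filter_subset _ s), hclique⟩
      · obtain ⟨t, ht, hclique⟩ | ⟨t, ht, hclique⟩ :=
          hN₂ G (s.filter (Gᶜ.Adj v)) (by omega)
        · exact .inl ⟨t, ht.trans (Finset.filter_subset _ s), hclique⟩
        · exact .inr (exists_isNClique_succ hv ht hclique)

theorem exists_embedding_forall_adj_iff (m : ℕ) :
    ∃ M : ℕ, ∀ G : SimpleGraph (Fin M), ∃ (g : Fin m ↪ Fin M) (c : Prop),
      ∀ a b, a ≠ b → (G.Adj (g a) (g b) ↔ c) := by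
  obtain ⟨M, hM⟩ := exists_isNClique_or_compl_isNClique m m
  refine ⟨M, fun G => ?_⟩
  obtain ⟨t, -, ht⟩ | ⟨t, -, ht⟩ := hM G Finset.univ (by simp)
  all_goals
    let g := t.orderEmbOfFin ht.card_eq
    have hadj : ∀ a b, a ≠ b → _ := fun a b hab =>
      ht.isClique (t.orderEmbOfFin_mem ht.card_eq a) (t.orderEmbOfFin_mem ht.card_eq b)
        (g.injective.ne hab)
  · exact ⟨g.toEmbedding, True, fun a b hab => iff_true_intro (hadj a b hab)⟩
  · exact ⟨g.toEmbedding, False, fun a b hab => iff_false_intro (hadj a b hab).2⟩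

end Ramsey

section Hereditary

variable {Q : GraphClass} {U V : Type*}

/-- The graph `F`, on an arbitrary vertex type, is isomorphic to an induced subgraph of a member
of `Q`. For a hereditary class this is membership up to relabelling the vertices. -/
def InAge (Q : GraphClass) (F : SimpleGraph V) : Prop :=
  ∃ n, ∃ G ∈ Q n, Nonempty (F ↪g G)

theorem InAge.of_embedding {F : SimpleGraph U} {F' : SimpleGraph V} (hF' : InAge Q F')
    (f : F ↪g F') : InAge Q F :=
  let ⟨n, G, hG, ⟨g⟩⟩ := hF'
  ⟨n, G, hG, ⟨g.comp f⟩⟩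

theorem IsHereditary.mem_of_embedding (hQ : IsHereditary Q) {m n : ℕ}
    {F : SimpleGraph (Fin m)} {G : SimpleGraph (Fin n)} (f : F ↪g G) (hG : G ∈ Q n) :
    F ∈ Q m := by
  have hsort : StrictMono (f ∘ Tuple.sort f) :=
    (Tuple.monotone_sort f).strictMono_of_injective
      (f.injective.comp (Tuple.sort f).injective)
  convert hQ.1 m (Tuple.sort f)⁻¹ _ (hQ.2 m n _ hsort G hG) using 1
  ext a b
  simp

theorem IsHereditary.mem_of_inAge (hQ : IsHereditary Q) {m : ℕ} {F : SimpleGraph (Fin m)}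
    (hF : InAge Q F) : F ∈ Q m :=
  let ⟨_, _, hG, ⟨f⟩⟩ := hF
  hQ.mem_of_embedding f hG

end Hereditary

section UnitInterval

/-- The uniform probability measure on `[0, 1]`, as a measure on `ℝ`. -/
abbrev unitVolume : Measure ℝ := volume.restrict (Icc 0 1)

instance isProbabilityMeasure_unitVolume : IsProbabilityMeasure unitVolume :=
  ⟨by simp [unitVolume]⟩

theorem integral_unitVolume_indicator_Iio {a : ℝ} (ha : a ∈ Icc (0 : ℝ) 1) (c : ℝ) :
    ∫ t, (Iio a).indicator (fun _ => c) t ∂unitVolume = a * c := by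
  have hIco : Iio a ∩ Icc 0 1 = Ico 0 a := by
    ext t
    simp only [mem_inter_iff, mem_Iio, mem_Icc, mem_Ico]
    exact ⟨fun h => ⟨h.2.1, h.1⟩, fun h => ⟨h.2, h.1, h.2.le.trans ha.2⟩⟩
  rw [integral_indicator_const c measurableSet_Iio, smul_eq_mul,
    measureReal_restrict_apply measurableSet_Iio, hIco]
  simp [ha.1]

theorem abs_integral_le_of_forall_abs_le {α : Type*} [MeasurableSpace α] {μ : Measure α}
    [IsProbabilityMeasure μ] {f : α → ℝ} {C : ℝ} (hC : ∀ x, |f x| ≤ C) : |∫ x, f x ∂μ| ≤ C := by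
  simpa using norm_integral_le_of_norm_le_const (μ := μ) (f := f) (.of_forall hC)

theorem integrable_of_forall_abs_le {α : Type*} [MeasurableSpace α] {μ : Measure α}
    [IsFiniteMeasure μ] {f : α → ℝ} (hf : Measurable f) {C : ℝ} (hC : ∀ x, |f x| ≤ C) :
    Integrable f μ :=
  .of_bound hf.aestronglyMeasurable C (.of_forall hC)

/-- Layer-cake: averaging over the threshold `t` writes `f` as a mixture of the indicators of its
level sets. -/
theorem abs_integral_mul_le_of_levelSets {α : Type*} [MeasurableSpace α] {μ : Measure α}
    [SFinite μ] {f h : α → ℝ} {ε : ℝ} (hf : Measurable f) (hf01 : ∀ x, f x ∈ Icc (0 : ℝ) 1)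
    (hh : Integrable h μ) (hε : ∀ t, |∫ x in {x | t < f x}, h x ∂μ| ≤ ε) :
    |∫ x, f x * h x ∂μ| ≤ ε := by
  have hlevel : MeasurableSet {p : α × ℝ | p.2 < f p.1} :=
    measurableSet_lt measurable_snd (hf.comp measurable_fst)
  have hint : Integrable (Function.uncurry fun x t => (Iio (f x)).indicator (fun _ => h x) t)
      (μ.prod unitVolume) := by
    refine ((hh.comp_fst unitVolume).indicator hlevel).congr (.of_forall fun p => ?_)
    simp [indicator_apply, Function.uncurry]
  have hlayer (t : ℝ) : ∫ x, (Iio (f x)).indicator (fun _ => h x) t ∂μ =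
      ∫ x in {x | t < f x}, h x ∂μ := by
    rw [← integral_indicator (measurableSet_lt measurable_const hf)]
    rfl
  calc |∫ x, f x * h x ∂μ|
      = |∫ x, ∫ t, (Iio (f x)).indicator (fun _ => h x) t ∂unitVolume ∂μ| := by
        simp_rw [integral_unitVolume_indicator_Iio (hf01 _)]
    _ = |∫ t, ∫ x in {x | t < f x}, h x ∂μ ∂unitVolume| := by
        rw [integral_integral_swap hint]
        simp_rw [hlayer]
    _ ≤ ε := abs_integral_le_of_forall_abs_le hε

end UnitInterval

section Counting

variable {Ω : Type*} [MeasurableSpace Ω]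

/-- A kernel on a measurable space with values in `[0, 1]`: a graphon without the symmetry. -/
structure IsUnitKernel (K : Ω → Ω → ℝ) : Prop where
  measurable : Measurable (Function.uncurry K)
  mem_Icc : ∀ s t, K s t ∈ Icc (0 : ℝ) 1

theorem IsUnitKernel.one_sub {K : Ω → Ω → ℝ} (hK : IsUnitKernel K) :
    IsUnitKernel fun s t => 1 - K s t where
  measurable := measurable_const.sub hK.measurable
  mem_Icc s t := ⟨sub_nonneg.2 (hK.mem_Icc s t).2, sub_le_self 1 (hK.mem_Icc s t).1⟩

theorem IsUnitKernel.abs_sub_le {K L : Ω → Ω → ℝ} (hK : IsUnitKernel K) (hL : IsUnitKernel L)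
    (s t : Ω) : |K s t - L s t| ≤ 1 :=
  abs_sub_le_of_nonneg_of_le (hK.mem_Icc s t).1 (hK.mem_Icc s t).2 (hL.mem_Icc s t).1
    (hL.mem_Icc s t).2

/-- `‖D‖_□ ≤ ε` for a kernel on an arbitrary measure space. Unlike `cutNorm`, no supremum is
taken, so there is no junk value for unbounded kernels. -/
def CutNormLE (μ : Measure Ω) (D : Ω → Ω → ℝ) (ε : ℝ) : Prop :=
  ∀ S T : Set Ω, MeasurableSet S → MeasurableSet T →
    |∫ p in S ×ˢ T, D p.1 p.2 ∂μ.prod μ| ≤ ε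

variable {μ : Measure Ω} {D : Ω → Ω → ℝ} {ε : ℝ}

theorem CutNormLE.neg (hD : CutNormLE μ D ε) : CutNormLE μ (fun s t => -D s t) ε :=
  fun S T hS hT => by simpa only [integral_neg, abs_neg] using hD S T hS hT

theorem CutNormLE.abs_integral_mul_mul_le [SFinite μ] (hD : CutNormLE μ D ε)
    (hint : Integrable (Function.uncurry D) (μ.prod μ)) {f g : Ω → ℝ} (hf : Measurable f)
    (hf01 : ∀ s, f s ∈ Icc (0 : ℝ) 1) (hg : Measurable g) (hg01 : ∀ t, g t ∈ Icc (0 : ℝ) 1) :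
    |∫ p, f p.1 * (g p.2 * D p.1 p.2) ∂μ.prod μ| ≤ ε := by
  have hg_bdd : ∀ᵐ p : Ω × Ω ∂μ.prod μ, ‖g p.2‖ ≤ 1 :=
    .of_forall fun p => by simpa [abs_of_nonneg (hg01 p.2).1] using (hg01 p.2).2
  have hf_fst : Measurable fun p : Ω × Ω => f p.1 := hf.comp measurable_fst
  have hg_snd : Measurable fun p : Ω × Ω => g p.2 := hg.comp measurable_snd
  refine abs_integral_mul_le_of_levelSets hf_fst (fun _ => hf01 _)
    (hint.bdd_mul hg_snd.aestronglyMeasurable hg_bdd) fun s => ?_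
  refine abs_integral_mul_le_of_levelSets hg_snd (fun _ => hg01 _) hint.restrict fun t => ?_
  rw [Measure.restrict_restrict (measurableSet_lt measurable_const hg_snd), inter_comm]
  exact hD _ _ (measurableSet_lt measurable_const hf) (measurableSet_lt measurable_const hg)

theorem measurable_kernel_eval {ι : Type*} {K : Ω → Ω → ℝ}
    (hK : Measurable (Function.uncurry K)) (u v : ι) :
    Measurable fun x : ι → Ω => K (x u) (x v) := by
  have heval : Measurable fun x : ι → Ω => (x u, x v) := by fun_prop
  exact hK.comp heval

variable {V : Type*} [Fintype V]

theorem measurePreserving_update [DecidableEq V] (μ : Measure Ω) [IsProbabilityMeasure μ] (u : V) :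
    MeasurePreserving (fun p : Ω × (V → Ω) => Function.update p.2 u p.1)
      (μ.prod (Measure.pi fun _ => μ)) (Measure.pi fun _ => μ) := by
  have hmeas : Measurable fun p : Ω × (V → Ω) => Function.update p.2 u p.1 :=
    measurable_update'.comp measurable_swap
  refine ⟨hmeas, (Measure.pi_eq fun s hs => ?_).symm⟩
  have hpre : (fun p : Ω × (V → Ω) => Function.update p.2 u p.1) ⁻¹' univ.pi s =
      s u ×ˢ univ.pi (Function.update s u univ) := by
    ext p
    simp only [mem_preimage, mem_univ_pi, mem_prod, Function.update_apply]
    refine ⟨fun h => ⟨by simpa using h u, fun i => ?_⟩, fun h i => ?_⟩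
    · rcases eq_or_ne i u with rfl | hi
      · simp
      · simpa [hi] using h i
    · rcases eq_or_ne i u with rfl | hi
      · simpa using h.1
      · simpa [hi] using h.2 i
  rw [Measure.map_apply hmeas (.univ_pi hs), hpre, Measure.prod_prod, Measure.pi_pi,
    ← Finset.mul_prod_erase _ _ (Finset.mem_univ u),
    ← Finset.mul_prod_erase _ (fun i => μ (s i)) (Finset.mem_univ u), Function.update_self,
    measure_univ, one_mul]
  congr 1
  exact Finset.prod_congr rfl fun i hi => by rw [Function.update_of_ne (Finset.ne_of_mem_erase hi)]

variable [IsProbabilityMeasure μ]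

theorem integral_pi_eq_integral_update_update [DecidableEq V] {Φ : (V → Ω) → ℝ}
    (hΦ : Integrable Φ (Measure.pi fun _ => μ)) (u v : V) :
    ∫ x, Φ x ∂Measure.pi (fun _ => μ) =
      ∫ x, ∫ p, Φ (Function.update (Function.update x u p.1) v p.2) ∂μ.prod μ
        ∂Measure.pi (fun _ => μ) := by
  have hmp : MeasurePreserving
      (fun q : (Ω × Ω) × (V → Ω) =>
        Function.update (Function.update q.2 u q.1.1) v q.1.2)
      ((μ.prod μ).prod (Measure.pi fun _ => μ)) (Measure.pi fun _ => μ) :=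
    (measurePreserving_update μ v).comp <|
      ((MeasurePreserving.id μ).prod (measurePreserving_update μ u)).comp <|
        (measurePreserving_prodAssoc μ μ _).comp <|
          Measure.measurePreserving_swap.prod (.id _)
  have hΦ' := hΦ
  rw [← hmp.map_eq] at hΦ'
  conv_lhs => rw [← hmp.map_eq]
  rw [integral_map hmp.aemeasurable hΦ'.aestronglyMeasurable]
  exact integral_prod_symm _ (hmp.integrable_comp_of_integrable hΦ)

theorem CutNormLE.abs_integral_pi_mul_mul_le (hD : CutNormLE μ D ε)
    (hmeas : Measurable (Function.uncurry D)) (hbdd : ∀ s t, |D s t| ≤ 1) {u v : V} (huv : u ≠ v)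
    {f g : (V → Ω) → ℝ} (hf : Measurable f) (hf01 : ∀ x, f x ∈ Icc (0 : ℝ) 1)
    (hfv : DependsOn f {v}ᶜ) (hg : Measurable g) (hg01 : ∀ x, g x ∈ Icc (0 : ℝ) 1)
    (hgu : DependsOn g {u}ᶜ) :
    |∫ x, f x * (g x * D (x u) (x v)) ∂Measure.pi fun _ => μ| ≤ ε := by
  classical
  have hint : Integrable (fun x => f x * (g x * D (x u) (x v))) (Measure.pi fun _ => μ) := by
    refine integrable_of_forall_abs_le (hf.mul (hg.mul (measurable_kernel_eval hmeas u v)))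
      (C := 1) fun x => ?_
    rw [abs_mul, abs_mul, abs_of_nonneg (hf01 x).1, abs_of_nonneg (hg01 x).1]
    exact mul_le_one₀ (hf01 x).2 (mul_nonneg (hg01 x).1 (abs_nonneg _))
      (mul_le_one₀ (hg01 x).2 (abs_nonneg _) (hbdd _ _))
  rw [integral_pi_eq_integral_update_update hint u v]
  refine abs_integral_le_of_forall_abs_le fun x => ?_
  have hf_update (p : Ω × Ω) : f (Function.update (Function.update x u p.1) v p.2) =
      f (Function.update x u p.1) :=
    hfv fun i hi => Function.update_of_ne hi _ _
  have hg_update (p : Ω × Ω) : g (Function.update (Function.update x u p.1) v p.2) =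
      g (Function.update x v p.2) := by
    rw [Function.update_comm huv]
    exact hgu fun i hi => Function.update_of_ne hi _ _
  simp only [hf_update, hg_update, Function.update_self, Function.update_of_ne huv]
  exact hD.abs_integral_mul_mul_le (integrable_of_forall_abs_le hmeas fun p => hbdd _ _)
    (hf.comp (measurable_update x)) (fun _ => hf01 _) (hg.comp (measurable_update x))
    fun _ => hg01 _

end Counting

section Telescoping

variable {Ω V : Type*}

theorem dependsOn_prod_kernel (C : V × V → Ω → Ω → ℝ) {P : Finset (V × V)} {w : V}
    (hw : ∀ q ∈ P, q.1 ≠ w ∧ q.2 ≠ w) :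
    DependsOn (fun x : V → Ω => ∏ q ∈ P, C q (x q.1) (x q.2)) {w}ᶜ :=
  fun x y hxy => Finset.prod_congr rfl fun q hq => by
    rw [hxy _ (hw q hq).1, hxy _ (hw q hq).2]

variable [MeasurableSpace Ω]

theorem measurable_prod_kernel {C : V × V → Ω → Ω → ℝ} (hC : ∀ q, IsUnitKernel (C q))
    (P : Finset (V × V)) : Measurable fun x : V → Ω => ∏ q ∈ P, C q (x q.1) (x q.2) :=
  Finset.measurable_prod _ fun q _ => measurable_kernel_eval (hC q).measurable q.1 q.2

theorem prod_kernel_mem_Icc {C : V × V → Ω → Ω → ℝ} (hC : ∀ q, IsUnitKernel (C q))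
    (P : Finset (V × V)) (x : V → Ω) : ∏ q ∈ P, C q (x q.1) (x q.2) ∈ Icc (0 : ℝ) 1 :=
  ⟨Finset.prod_nonneg fun q _ => ((hC q).mem_Icc _ _).1,
    Finset.prod_le_one (fun q _ => ((hC q).mem_Icc _ _).1) fun q _ => ((hC q).mem_Icc _ _).2⟩

variable {μ : Measure Ω} [IsProbabilityMeasure μ] {ε : ℝ} [Fintype V]

theorem integrable_prod_kernel {C : V × V → Ω → Ω → ℝ} (hC : ∀ q, IsUnitKernel (C q))
    (P : Finset (V × V)) :
    Integrable (fun x : V → Ω => ∏ q ∈ P, C q (x q.1) (x q.2)) (Measure.pi fun _ => μ) :=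
  integrable_of_forall_abs_le (measurable_prod_kernel hC P) fun x =>
    (abs_of_nonneg (prod_kernel_mem_Icc hC P x).1).trans_le
      (prod_kernel_mem_Icc hC P x).2

variable [LinearOrder V]

/-- The factors of the product that involve the vertex `q.2` do not involve `q.1`. -/
theorem CutNormLE.abs_integral_prod_update_sub_le {P : Finset (V × V)}
    (hP : ∀ q ∈ P, q.1 < q.2) {C : V × V → Ω → Ω → ℝ} (hC : ∀ q, IsUnitKernel (C q))
    {A B : Ω → Ω → ℝ} (hA : IsUnitKernel A) (hB : IsUnitKernel B)
    (hAB : CutNormLE μ (fun s t => A s t - B s t) ε) {q : V × V} (hq : q ∈ P) :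
    |∫ x, (∏ p ∈ P, Function.update C q A p (x p.1) (x p.2)) -
        ∏ p ∈ P, Function.update C q B p (x p.1) (x p.2) ∂Measure.pi fun _ => μ| ≤ ε := by
  let Pf := (P.erase q).filter fun p => p.1 ≠ q.2 ∧ p.2 ≠ q.2
  let Pg := (P.erase q).filter fun p => ¬(p.1 ≠ q.2 ∧ p.2 ≠ q.2)
  have hsplit (K : Ω → Ω → ℝ) (x : V → Ω) :
      ∏ p ∈ P, Function.update C q K p (x p.1) (x p.2) =
        (∏ p ∈ Pf, C p (x p.1) (x p.2)) *
          ((∏ p ∈ Pg, C p (x p.1) (x p.2)) * K (x q.1) (x q.2)) := by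
    rw [← mul_assoc, Finset.prod_filter_mul_prod_filter_not, mul_comm,
      ← Finset.mul_prod_erase _ _ hq, Function.update_self]
    congr 1
    exact Finset.prod_congr rfl fun p hp => by
      rw [Function.update_of_ne (Finset.ne_of_mem_erase hp)]
  have hPg : ∀ p ∈ Pg, p.1 ≠ q.1 ∧ p.2 ≠ q.1 := by
    intro p hp
    obtain ⟨⟨hpq, hpP⟩, hmeet⟩ : (p ≠ q ∧ p ∈ P) ∧ ¬(p.1 ≠ q.2 ∧ p.2 ≠ q.2) := by
      simpa [Pg] using hp
    have := hP p hpP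
    have := hP q hq
    have := mt (Prod.ext_iff (x := p) (y := q)).2 hpq
    grind
  simp only [hsplit, ← mul_sub]
  exact hAB.abs_integral_pi_mul_mul_le (hA.measurable.sub hB.measurable) (hA.abs_sub_le hB)
    (hP q hq).ne (measurable_prod_kernel hC _) (prod_kernel_mem_Icc hC _)
    (dependsOn_prod_kernel C fun p hp => (Finset.mem_filter.1 hp).2)
    (measurable_prod_kernel hC _) (prod_kernel_mem_Icc hC _)
    (dependsOn_prod_kernel C hPg)

theorem CutNormLE.abs_integral_prod_sub_integral_prod_le {P : Finset (V × V)}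
    (hP : ∀ q ∈ P, q.1 < q.2) {A B : V × V → Ω → Ω → ℝ} (hA : ∀ q, IsUnitKernel (A q))
    (hB : ∀ q, IsUnitKernel (B q)) (hAB : ∀ q, CutNormLE μ (fun s t => A q s t - B q s t) ε) :
    |(∫ x, ∏ q ∈ P, A q (x q.1) (x q.2) ∂Measure.pi fun _ => μ) -
        ∫ x, ∏ q ∈ P, B q (x q.1) (x q.2) ∂Measure.pi fun _ => μ| ≤ P.card * ε := by
  classical
  have hmix (S : Finset (V × V)) (q : V × V) : IsUnitKernel (S.piecewise A B q) :=
    S.piecewise_cases A B IsUnitKernel (hA q) (hB q)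
  let I (S : Finset (V × V)) : ℝ :=
    ∫ x, ∏ q ∈ P, S.piecewise A B q (x q.1) (x q.2) ∂Measure.pi fun _ => μ
  suffices htele : ∀ S ⊆ P, |I S - I ∅| ≤ S.card * ε by
    have hP_mix (x : V → Ω) : ∏ q ∈ P, P.piecewise A B q (x q.1) (x q.2) =
        ∏ q ∈ P, A q (x q.1) (x q.2) :=
      Finset.prod_congr rfl fun q hq => by rw [P.piecewise_eq_of_mem A B hq]
    simpa only [I, Finset.piecewise_empty, hP_mix] using htele P subset_rfl
  intro S
  induction S using Finset.induction_on with
  | empty => simp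
  | insert q S hqS ih =>
    intro hS
    have hq : q ∈ P := hS (Finset.mem_insert_self q S)
    have hstep : |I (insert q S) - I S| ≤ ε := by
      have hS_eq : S.piecewise A B = Function.update (S.piecewise A B) q (B q) := by
        rw [Function.eq_update_self_iff, S.piecewise_eq_of_notMem A B hqS]
      rw [← integral_sub (integrable_prod_kernel (hmix _) P)
        (integrable_prod_kernel (hmix _) P), Finset.piecewise_insert]
      conv_lhs => enter [1, 2, x, 2, 2, q]; rw [hS_eq]
      exact (hAB q).abs_integral_prod_update_sub_le hP (hmix S) (hA q) (hB q) hq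
    calc |I (insert q S) - I ∅| ≤ |I (insert q S) - I S| + |I S - I ∅| := abs_sub_le _ _ _
      _ ≤ ε + S.card * ε := add_le_add hstep (ih ((Finset.subset_insert q S).trans hS))
      _ = (insert q S).card * ε := by
        rw [Finset.card_insert_of_notMem hqS]
        push_cast
        ring

end Telescoping

section CutDistance

variable {U W : ℝ → ℝ → ℝ}

theorem IsGraphon.isUnitKernel (hW : IsGraphon W) : IsUnitKernel W :=
  ⟨hW.2.1, hW.2.2⟩

theorem IsGraphon.comp (hW : IsGraphon W) {σ : ℝ → ℝ} (hσ : Measurable σ) :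
    IsGraphon fun x y => W (σ x) (σ y) :=
  ⟨fun _ _ => hW.1 _ _, hW.2.1.comp (hσ.prodMap hσ), fun _ _ => hW.2.2 _ _⟩

theorem isMPSelf_id : IsMPSelf id :=
  ⟨.id _, mapsTo_id _⟩

theorem cutNorm_nonneg (D : ℝ → ℝ → ℝ) : 0 ≤ cutNorm D :=
  Real.sSup_nonneg <| by
    rintro _ ⟨S, T, -, -, -, -, rfl⟩
    exact abs_nonneg _

theorem deltaCut_nonneg (U W : ℝ → ℝ → ℝ) : 0 ≤ deltaCut U W :=
  Real.sInf_nonneg <| by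
    rintro _ ⟨σ₁, σ₂, -, -, rfl⟩
    exact cutNorm_nonneg _

theorem deltaCut_le_dCut (U W : ℝ → ℝ → ℝ) : deltaCut U W ≤ dCut U W :=
  csInf_le ⟨0, by rintro _ ⟨σ₁, σ₂, -, -, rfl⟩; exact cutNorm_nonneg _⟩
    ⟨id, id, isMPSelf_id, isMPSelf_id, rfl⟩

theorem setIntegral_prod_unitVolume (D : ℝ → ℝ → ℝ) {S T : Set ℝ} (hS : MeasurableSet S)
    (hT : MeasurableSet T) : ∫ p in S ×ˢ T, D p.1 p.2 ∂unitVolume.prod unitVolume =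
      ∫ p in (S ∩ Icc 0 1) ×ˢ (T ∩ Icc 0 1), D p.1 p.2 := by
  rw [Measure.prod_restrict, Measure.restrict_restrict (hS.prod hT), prod_inter_prod]
  rfl

theorem cutNormLE_cutNorm {D : ℝ → ℝ → ℝ} {C : ℝ} (hC : ∀ x y, |D x y| ≤ C) :
    CutNormLE unitVolume D (cutNorm D) := by
  intro S T hS hT
  rw [setIntegral_prod_unitVolume D hS hT]
  refine le_csSup ⟨C, ?_⟩ ⟨_, _, hS.inter measurableSet_Icc, hT.inter measurableSet_Icc,
    inter_subset_right, inter_subset_right, rfl⟩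
  rintro _ ⟨S', T', hS', hT', hS01, hT01, rfl⟩
  have hC0 : 0 ≤ C := (abs_nonneg _).trans (hC 0 0)
  rw [← inter_eq_left.2 hS01, ← inter_eq_left.2 hT01, ← setIntegral_prod_unitVolume D hS' hT']
  calc |∫ p in S' ×ˢ T', D p.1 p.2 ∂unitVolume.prod unitVolume|
      ≤ C * (unitVolume.prod unitVolume).real (S' ×ˢ T') :=
        norm_setIntegral_le_of_norm_le_const (f := fun p : ℝ × ℝ => D p.1 p.2)
          (measure_lt_top _ _) fun p _ => hC p.1 p.2
    _ ≤ C := mul_le_of_le_one_right hC0 measureReal_le_one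

open Classical in
theorem isGraphon_graphonOfGraph {n : ℕ} (G : SimpleGraph (Fin n)) :
    IsGraphon (graphonOfGraph G) := by
  refine ⟨fun x y => ?_, ?_, fun x y => ?_⟩
  · have hsymm : (∃ i j : Fin n, G.Adj i j ∧ ⌈(n : ℝ) * x⌉ = (i : ℤ) + 1 ∧
        ⌈(n : ℝ) * y⌉ = (j : ℤ) + 1) ↔ ∃ i j : Fin n, G.Adj i j ∧ ⌈(n : ℝ) * y⌉ = (i : ℤ) + 1 ∧
        ⌈(n : ℝ) * x⌉ = (j : ℤ) + 1 := by
      rw [exists_comm]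
      simp only [G.adj_comm, and_comm (a := ⌈(n : ℝ) * x⌉ = _)]
    exact if_congr hsymm rfl rfl
  · have hceil (i : ℤ) : MeasurableSet {x : ℝ | ⌈(n : ℝ) * x⌉ = i} :=
      (Int.measurable_ceil.comp (measurable_const_mul _)) (measurableSet_singleton i)
    refine Measurable.ite ?_ measurable_const measurable_const
    simp only [ofPred_exists]
    exact .iUnion fun i => .iUnion fun j => (MeasurableSet.const _).inter
      ((measurable_fst (hceil _)).inter (measurable_snd (hceil _)))
  · unfold graphonOfGraph
    split_ifs <;> simp

end CutDistance

section InducedDensity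

variable {k : ℕ} {F : SimpleGraph (Fin k)} {U W : ℝ → ℝ → ℝ}

/-- The pairs `i < j` in `Fin k`, each representing one potential edge. -/
def orderedPairs (k : ℕ) : Finset (Fin k × Fin k) :=
  Finset.univ.filter fun q => q.1 < q.2

open Classical in
/-- The factor contributed by the pair `q` to the induced density of `F` in `W`. -/
def edgeKernel (F : SimpleGraph (Fin k)) (W : ℝ → ℝ → ℝ) (q : Fin k × Fin k) : ℝ → ℝ → ℝ :=
  fun s t => if F.Adj q.1 q.2 then W s t else 1 - W s t

theorem IsGraphon.isUnitKernel_edgeKernel (hW : IsGraphon W) (q : Fin k × Fin k) :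
    IsUnitKernel (edgeKernel F W q) := by
  unfold edgeKernel
  split_ifs
  · exact hW.isUnitKernel
  · exact hW.isUnitKernel.one_sub

theorem CutNormLE.edgeKernel_sub {μ : Measure ℝ} {ε : ℝ}
    (h : CutNormLE μ (fun s t => U s t - W s t) ε) (q : Fin k × Fin k) :
    CutNormLE μ (fun s t => edgeKernel F U q s t - edgeKernel F W q s t) ε := by
  unfold edgeKernel
  split_ifs
  · exact h
  · simpa only [sub_sub_sub_cancel_left, neg_sub] using h.neg

theorem inducedDensity_eq_integral_edgeKernel (F : SimpleGraph (Fin k)) (W : ℝ → ℝ → ℝ) :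
    inducedDensity F W = ∫ x, ∏ q ∈ orderedPairs k, edgeKernel F W q (x q.1) (x q.2)
      ∂Measure.pi fun _ => unitVolume := by
  rw [inducedDensity, volume_pi, Measure.restrict_pi_pi]
  simp only [orderedPairs, Finset.prod_filter, Fintype.prod_prod_type, edgeKernel]

theorem inducedDensity_comp (F : SimpleGraph (Fin k)) (hW : IsGraphon W) {σ : ℝ → ℝ}
    (hσ : IsMPSelf σ) : inducedDensity F (fun x y => W (σ x) (σ y)) = inducedDensity F W := by
  have hmp : MeasurePreserving (fun (x : Fin k → ℝ) i => σ (x i))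
      (Measure.pi fun _ => unitVolume) (Measure.pi fun _ => unitVolume) :=
    measurePreserving_pi _ _ fun _ => hσ.1
  rw [inducedDensity_eq_integral_edgeKernel F W, ← hmp.map_eq,
    integral_map hmp.aemeasurable
      (measurable_prod_kernel hW.isUnitKernel_edgeKernel _).aestronglyMeasurable,
    inducedDensity_eq_integral_edgeKernel]
  rfl

theorem abs_inducedDensity_sub_le_dCut (F : SimpleGraph (Fin k)) (hU : IsGraphon U)
    (hW : IsGraphon W) :
    |inducedDensity F U - inducedDensity F W| ≤ (orderedPairs k).card * dCut U W := by
  rw [inducedDensity_eq_integral_edgeKernel, inducedDensity_eq_integral_edgeKernel]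
  exact CutNormLE.abs_integral_prod_sub_integral_prod_le
    (fun q hq => (Finset.mem_filter.1 hq).2) hU.isUnitKernel_edgeKernel
    hW.isUnitKernel_edgeKernel
    (cutNormLE_cutNorm (hU.isUnitKernel.abs_sub_le hW.isUnitKernel)).edgeKernel_sub

theorem abs_inducedDensity_sub_le_deltaCut (F : SimpleGraph (Fin k)) (hU : IsGraphon U)
    (hW : IsGraphon W) :
    |inducedDensity F U - inducedDensity F W| ≤ (orderedPairs k).card * deltaCut U W := by
  rw [← smul_eq_mul, deltaCut, ← Real.sInf_smul_of_nonneg (Nat.cast_nonneg _)]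
  refine le_csInf (Set.Nonempty.smul_set ⟨_, id, id, isMPSelf_id, isMPSelf_id, rfl⟩) ?_
  rintro _ ⟨_, ⟨σ₁, σ₂, hσ₁, hσ₂, rfl⟩, rfl⟩
  rw [← inducedDensity_comp F hU hσ₁, ← inducedDensity_comp F hW hσ₂]
  exact abs_inducedDensity_sub_le_dCut F (hU.comp hσ₁.1.measurable) (hW.comp hσ₂.1.measurable)

theorem tendsto_inducedDensity {ι : Type*} {l : Filter ι} {U : ι → ℝ → ℝ → ℝ}
    (F : SimpleGraph (Fin k)) (hU : ∀ i, IsGraphon (U i)) (hW : IsGraphon W)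
    (h : Tendsto (fun i => deltaCut (U i) W) l (nhds 0)) :
    Tendsto (fun i => inducedDensity F (U i)) l (nhds (inducedDensity F W)) := by
  rw [tendsto_iff_dist_tendsto_zero]
  refine squeeze_zero (fun _ => dist_nonneg)
    (fun i => abs_inducedDensity_sub_le_deltaCut F (hU i) hW) ?_
  simpa using h.const_mul ((orderedPairs k).card : ℝ)

end InducedDensity

section Cells

variable {n : ℕ}

/-- The half-open interval `(v/n, (v+1)/n]`, on which the step functions with `n` equal steps are
constant. The index is zero-based, so `cell r i` is the interval `I_{i+1}`. -/
def cell (n v : ℕ) : Set ℝ :=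
  Ioc ((v : ℝ) / n) (((v : ℝ) + 1) / n)

theorem measurableSet_cell (n v : ℕ) : MeasurableSet (cell n v) :=
  measurableSet_Ioc

theorem mem_cell_iff_ceil (hn : 0 < n) {v : ℕ} {x : ℝ} :
    x ∈ cell n v ↔ ⌈(n : ℝ) * x⌉ = (v : ℤ) + 1 := by
  have hn' : (0 : ℝ) < n := Nat.cast_pos.2 hn
  rw [cell, mem_Ioc, div_lt_iff₀' hn', le_div_iff₀' hn', Int.ceil_eq_iff]
  push_cast
  rw [add_sub_cancel_right]

theorem eq_of_mem_cell (hn : 0 < n) {v w : ℕ} {x : ℝ} (hv : x ∈ cell n v) (hw : x ∈ cell n w) :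
    v = w := by
  rw [mem_cell_iff_ceil hn] at hv hw
  omega

theorem exists_mem_cell (hn : 0 < n) {x : ℝ} (hx : x ∈ Ioc (0 : ℝ) 1) :
    ∃ v : Fin n, x ∈ cell n v := by
  have hpos : 0 < ⌈(n : ℝ) * x⌉ := Int.ceil_pos.2 (mul_pos (Nat.cast_pos.2 hn) hx.1)
  have hle : ⌈(n : ℝ) * x⌉ ≤ n :=
    Int.ceil_le.2 (mod_cast mul_le_of_le_one_right n.cast_nonneg hx.2)
  exact ⟨⟨(⌈(n : ℝ) * x⌉ - 1).toNat, by omega⟩, (mem_cell_iff_ceil hn).2 (by simp only; omega)⟩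

open Classical in
theorem graphonOfGraph_of_mem_cell (G : SimpleGraph (Fin n)) {v w : Fin n} {x y : ℝ}
    (hx : x ∈ cell n v) (hy : y ∈ cell n w) :
    graphonOfGraph G x y = if G.Adj v w then 1 else 0 := by
  have hn : 0 < n := v.pos
  refine if_congr ?_ rfl rfl
  simp only [← mem_cell_iff_ceil hn]
  refine ⟨fun ⟨i, j, hij, hi, hj⟩ => ?_, fun h => ⟨v, w, h, hx, hy⟩⟩
  rwa [Fin.ext (eq_of_mem_cell hn hx hi), Fin.ext (eq_of_mem_cell hn hy hj)]

theorem volume_ceil_eq (hn : 0 < n) (c : ℤ) :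
    volume {x : ℝ | ⌈(n : ℝ) * x⌉ = c} = ENNReal.ofReal (1 / n) := by
  have hpre : {x : ℝ | ⌈(n : ℝ) * x⌉ = c} = ((n : ℝ) * ·) ⁻¹' (Int.ceil ⁻¹' {c}) := rfl
  rw [hpre, Int.preimage_ceil_singleton, Real.volume_preimage_mul_left (by positivity),
    Real.volume_Ioc]
  simp

end Cells

section Collisions

variable {Ω : Type*} [MeasurableSpace Ω] {μ : Measure Ω} [IsProbabilityMeasure μ]
  {V : Type*} [Fintype V] {f : Ω → ℤ} {δ : ENNReal}

theorem measure_pi_eval_eq_eval_le (hf : Measurable f) (hδ : ∀ c, μ {s | f s = c} ≤ δ) {u v : V}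
    (huv : u ≠ v) : Measure.pi (fun _ => μ) {x | f (x u) = f (x v)} ≤ δ := by
  classical
  have hmp := measurePreserving_update (V := V) μ u
  have hmeas : MeasurableSet {x : V → Ω | f (x u) = f (x v)} :=
    measurableSet_eq_fun (hf.comp (measurable_pi_apply u)) (hf.comp (measurable_pi_apply v))
  rw [← hmp.measure_preimage hmeas.nullMeasurableSet,
    Measure.prod_apply_symm (hmp.measurable hmeas)]
  calc ∫⁻ x, μ ((fun s => (s, x)) ⁻¹' ((fun p : Ω × (V → Ω) => Function.update p.2 u p.1) ⁻¹'
        {x | f (x u) = f (x v)})) ∂Measure.pi (fun _ => μ)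
      = ∫⁻ x, μ {s | f s = f (x v)} ∂Measure.pi (fun _ => μ) := by
        simp [preimage, Function.update_of_ne huv.symm]
    _ ≤ ∫⁻ _ : V → Ω, δ ∂Measure.pi (fun _ => μ) := lintegral_mono fun x => hδ _
    _ = δ := by simp

theorem measure_pi_not_injective_le (hf : Measurable f) (hδ : ∀ c, μ {s | f s = c} ≤ δ) :
    Measure.pi (fun _ => μ) {x | ¬Function.Injective fun v : V => f (x v)} ≤
      Fintype.card V ^ 2 * δ := by
  classical
  let P : Finset (V × V) := Finset.univ.filter fun q => q.1 ≠ q.2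
  have hsub : {x | ¬Function.Injective fun v : V => f (x v)} ⊆
      ⋃ q ∈ P, {x : V → Ω | f (x q.1) = f (x q.2)} := by
    intro x hx
    obtain ⟨u, v, huv, hne⟩ := Function.not_injective_iff.1 hx
    exact mem_iUnion₂.2 ⟨(u, v), by simpa [P] using hne, huv⟩
  calc Measure.pi (fun _ => μ) {x | ¬Function.Injective fun v : V => f (x v)}
      ≤ ∑ q ∈ P, Measure.pi (fun _ => μ) {x : V → Ω | f (x q.1) = f (x q.2)} :=
        (measure_mono hsub).trans (measure_biUnion_finset_le _ _)
    _ ≤ ∑ _q ∈ P, δ := Finset.sum_le_sum fun q hq =>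
        measure_pi_eval_eq_eval_le hf hδ (Finset.mem_filter.1 hq).2
    _ ≤ Fintype.card V ^ 2 * δ := by
        rw [Finset.sum_const, nsmul_eq_mul]
        gcongr
        exact_mod_cast (Finset.card_le_univ P).trans_eq (by rw [Fintype.card_prod, sq])

end Collisions

section EmbeddingOfDensity

variable {k n : ℕ} {F : SimpleGraph (Fin k)} {G : SimpleGraph (Fin n)}

theorem ae_unitVolume_mem_Ioc : ∀ᵐ x ∂unitVolume, x ∈ Ioc (0 : ℝ) 1 := by
  rw [unitVolume, ← Measure.restrict_congr_set Ioc_ae_eq_Icc]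
  exact ae_restrict_mem measurableSet_Ioc

theorem ae_pi_unitVolume_mem_Ioc (V : Type*) [Fintype V] :
    ∀ᵐ x ∂Measure.pi fun _ : V => unitVolume, ∀ v, x v ∈ Ioc (0 : ℝ) 1 :=
  ae_all_iff.2 fun v => (measurePreserving_eval (fun _ => unitVolume) v).quasiMeasurePreserving.ae
    ae_unitVolume_mem_Ioc

theorem nonempty_embedding_of_prod_edgeKernel_ne_zero (hn : 0 < n) {x : Fin k → ℝ}
    (hx : ∀ v, x v ∈ Ioc (0 : ℝ) 1) (hinj : Function.Injective fun v => ⌈(n : ℝ) * x v⌉)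
    (hprod : ∏ q ∈ orderedPairs k, edgeKernel F (graphonOfGraph G) q (x q.1) (x q.2) ≠ 0) :
    Nonempty (F ↪g G) := by
  classical
  choose φ hφ using fun v => exists_mem_cell hn (hx v)
  have hφ_inj : Function.Injective φ := fun u v huv => hinj <| by
    simp only [(mem_cell_iff_ceil hn).1 (hφ u), (mem_cell_iff_ceil hn).1 (hφ v), huv]
  have hlt : ∀ u v, u < v → (G.Adj (φ u) (φ v) ↔ F.Adj u v) := by
    intro u v huv
    have hfactor := Finset.prod_ne_zero_iff.1 hprod (u, v) (by simpa [orderedPairs] using huv)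
    simp only [edgeKernel, graphonOfGraph_of_mem_cell G (hφ u) (hφ v)] at hfactor
    grind
  refine ⟨⟨φ, hφ_inj⟩, fun {u v} => ?_⟩
  obtain huv | rfl | hvu := lt_trichotomy u v
  · exact hlt u v huv
  · simp
  · rw [F.adj_comm, ← hlt v u hvu, G.adj_comm]
    rfl

theorem nonempty_embedding_of_lt_inducedDensity (hn : 0 < n)
    (h : (k : ℝ) ^ 2 / n < inducedDensity F (graphonOfGraph G)) : Nonempty (F ↪g G) := by
  by_contra hF
  let B : Set (Fin k → ℝ) := {x | ¬Function.Injective fun v => ⌈(n : ℝ) * x v⌉}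
  have hceil : Measurable fun s : ℝ => ⌈(n : ℝ) * s⌉ :=
    Int.measurable_ceil.comp (measurable_const_mul _)
  have hBmeas : MeasurableSet B :=
    (measurable_pi_lambda _ fun v => hceil.comp (measurable_pi_apply v))
      (MeasurableSet.of_discrete (s := {c | ¬Function.Injective c}))
  have hB : (Measure.pi fun _ => unitVolume).real B ≤ (k : ℝ) ^ 2 / n := by
    refine ENNReal.toReal_le_of_le_ofReal (by positivity) ?_
    refine (measure_pi_not_injective_le hceil fun c =>
      (Measure.restrict_apply_le _ _).trans_eq (volume_ceil_eq hn c)).trans_eq ?_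
    rw [Fintype.card_fin, div_eq_mul_one_div ((k : ℝ) ^ 2), ENNReal.ofReal_mul (by positivity),
      ENNReal.ofReal_pow k.cast_nonneg, ENNReal.ofReal_natCast]
  have hle : inducedDensity F (graphonOfGraph G) ≤ (Measure.pi fun _ => unitVolume).real B := by
    have hK := (isGraphon_graphonOfGraph G).isUnitKernel_edgeKernel (F := F)
    rw [inducedDensity_eq_integral_edgeKernel, ← integral_indicator_one hBmeas]
    refine integral_mono_ae (integrable_prod_kernel hK _)
      ((integrable_const 1).indicator hBmeas) ?_
    filter_upwards [ae_pi_unitVolume_mem_Ioc (Fin k)] with x hx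
    by_cases hxB : x ∈ B
    · simpa [hxB] using (prod_kernel_mem_Icc hK _ x).2
    · simp only [hxB, not_false_eq_true, indicator_of_notMem]
      by_contra hpos
      exact hF (nonempty_embedding_of_prod_edgeKernel_ne_zero hn hx (not_not.1 hxB)
        fun h => hpos h.le)
  exact (hle.trans hB).not_gt h

theorem inAge_of_inducedDensity_pos {Q : GraphClass} {W : ℝ → ℝ → ℝ} (hW : W ∈ limitSet Q)
    (hpos : 0 < inducedDensity F W) : InAge Q F := by
  obtain ⟨hgraphon, nk, Gk, hGQ, hnk, hlim⟩ := hW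
  have hdensity := tendsto_inducedDensity F (fun i => isGraphon_graphonOfGraph (Gk i)) hgraphon hlim
  have herror : Tendsto (fun i => (k : ℝ) ^ 2 / nk i) atTop (nhds 0) :=
    (tendsto_const_div_atTop_nhds_zero_nat _).comp hnk
  obtain ⟨i, hlt, hi⟩ :=
    ((herror.eventually_lt hdensity hpos).and (hnk.eventually_gt_atTop 0)).exists
  exact ⟨nk i, Gk i, hGQ i, nonempty_embedding_of_lt_inducedDensity hi hlt⟩

end EmbeddingOfDensity

section Compatible

variable {U V : Type*} {W : ℝ → ℝ → ℝ}

/-- The graph `F` has positive probability of being sampled from `W` at the points `x`: its edges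
avoid the zeros of `W`, and its non-edges avoid the ones. -/
def IsCompatible (W : ℝ → ℝ → ℝ) (x : V → ℝ) (F : SimpleGraph V) : Prop :=
  ∀ u v, u ≠ v → (F.Adj u v → W (x u) (x v) ≠ 0) ∧ (¬F.Adj u v → W (x u) (x v) ≠ 1)

theorem IsCompatible.prod_edgeKernel_ne_zero {k : ℕ} {x : Fin k → ℝ} {F : SimpleGraph (Fin k)}
    (h : IsCompatible W x F) :
    ∏ q ∈ orderedPairs k, edgeKernel F W q (x q.1) (x q.2) ≠ 0 := by
  refine Finset.prod_ne_zero_iff.2 fun q hq => ?_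
  obtain ⟨hadj, hnadj⟩ := h q.1 q.2 (Finset.mem_filter.1 hq).2.ne
  unfold edgeKernel
  split_ifs with hq
  · exact hadj hq
  · exact sub_ne_zero.2 (hnadj hq).symm

theorem ae_inAge_of_isCompatible {Q : GraphClass} (hW : W ∈ limitSet Q) (k : ℕ) :
    ∀ᵐ x ∂Measure.pi fun _ : Fin k => unitVolume,
      ∀ F : SimpleGraph (Fin k), IsCompatible W x F → InAge Q F := by
  rw [ae_all_iff]
  intro F
  by_cases hF : InAge Q F
  · exact .of_forall fun _ _ => hF
  have hK := hW.1.isUnitKernel_edgeKernel (F := F)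
  have hnonneg (x : Fin k → ℝ) := (prod_kernel_mem_Icc hK (orderedPairs k) x).1
  have hzero : inducedDensity F W = 0 := by
    refine le_antisymm (not_lt.1 fun hpos => hF (inAge_of_inducedDensity_pos hW hpos)) ?_
    rw [inducedDensity_eq_integral_edgeKernel]
    exact integral_nonneg hnonneg
  rw [inducedDensity_eq_integral_edgeKernel,
    integral_eq_zero_iff_of_nonneg hnonneg (integrable_prod_kernel hK _)] at hzero
  filter_upwards [hzero] with x hx hcomp using absurd hx hcomp.prod_edgeKernel_ne_zero

theorem IsCompatible.exists_comap_eq (hW : IsGraphon W) {x : V → ℝ} {g : U ↪ V}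
    {F : SimpleGraph U} (h : IsCompatible W (x ∘ g) F) :
    ∃ F' : SimpleGraph V, IsCompatible W x F' ∧ F'.comap g = F := by
  let outside (u v : V) : Prop := ¬(u ∈ range g ∧ v ∈ range g) ∧ W (x u) (x v) ≠ 0
  refine ⟨F.map g ⊔ .fromRel outside, fun u v huv => ?_, ?_⟩
  · by_cases hrange : u ∈ range g ∧ v ∈ range g
    · obtain ⟨⟨a, rfl⟩, b, rfl⟩ := hrange
      simpa [outside] using h a b (ne_of_apply_ne g huv)
    · have hmap : ¬(F.map g).Adj u v := by
        rintro ⟨-, a, b, -, rfl, rfl⟩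
        exact hrange ⟨mem_range_self a, mem_range_self b⟩
      have hadj : (F.map g ⊔ .fromRel outside).Adj u v ↔ W (x u) (x v) ≠ 0 := by
        rw [SimpleGraph.sup_adj, SimpleGraph.fromRel_adj]
        simp only [outside, hmap, huv, hrange, and_comm (a := v ∈ range g), hW.1 (x v) (x u),
          not_false_eq_true, true_and, ne_eq, false_or, or_self]
      grind
  · ext a b
    simp [outside]

end Compatible

section BlowUp

variable {α β κ : Type*} [MeasurableSpace α] [MeasurableSpace β] [Fintype κ]
  {μ : Measure α} [SigmaFinite μ] {ν : Measure β} [SigmaFinite ν]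

theorem frequently_pi_forall {p : α → Prop} (hp : ∃ᵐ a ∂μ, p a) :
    ∃ᵐ x ∂Measure.pi fun _ : κ => μ, ∀ j, p (x j) := by
  rw [frequently_ae_iff] at hp ⊢
  have hpi : {x : κ → α | ∀ j, p (x j)} = univ.pi fun _ => {a | p a} := by ext; simp
  rw [hpi, Measure.pi_pi]
  exact Finset.prod_ne_zero_iff.2 fun _ _ => hp

theorem frequently_frequently_comm {p : α → β → Prop}
    (hp : MeasurableSet {z : α × β | p z.1 z.2}) :
    (∃ᵐ a ∂μ, ∃ᵐ b ∂ν, p a b) ↔ ∃ᵐ b ∂ν, ∃ᵐ a ∂μ, p a b := by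
  simpa only [Filter.Frequently, not_not] using not_congr (Measure.ae_ae_comm hp.compl)

theorem measurableSet_forall_comp {ι : Type*} [Countable ι] {p : α → Prop}
    (hp : MeasurableSet {a | p a}) {f : ι → β → α} (hf : ∀ i, Measurable (f i)) :
    MeasurableSet {b | ∀ i, p (f i b)} := by
  rw [ofPred_forall]
  exact .iInter fun i => hf i hp

theorem measurePreserving_fin_cons (μ : Measure α) [SigmaFinite μ] (n : ℕ) :
    MeasurePreserving (fun z : α × (Fin n → α) => (Fin.cons z.1 z.2 : Fin (n + 1) → α))
      (μ.prod (Measure.pi fun _ => μ)) (Measure.pi fun _ => μ) := by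
  simpa [Fin.consEquiv] using (measurePreserving_piFinSuccAbove (fun _ => μ) 0).symm

theorem frequently_pi_fin_succ {n : ℕ} {p : (Fin (n + 1) → α) → Prop}
    (hp : MeasurableSet {x | p x}) :
    (∃ᵐ x ∂Measure.pi fun _ => μ, p x) ↔
      ∃ᵐ a ∂μ, ∃ᵐ x ∂Measure.pi fun _ => μ, p (Fin.cons a x) := by
  have hmp := measurePreserving_fin_cons μ n
  have hae : (∀ᵐ x ∂Measure.pi fun _ => μ, ¬p x) ↔
      ∀ᵐ a ∂μ, ∀ᵐ x ∂Measure.pi fun _ => μ, ¬p (Fin.cons a x) := by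
    rw [← hmp.map_eq, ae_map_iff hmp.aemeasurable (p := fun x => ¬p x) hp.compl]
    exact Measure.ae_prod_iff_ae_ae (hmp.measurable hp.compl)
  simpa only [Filter.Frequently, not_not] using not_congr hae

theorem frequently_pi_pi_of_frequently_pi {r : ℕ} {p : (Fin r → α) → Prop}
    (hp : MeasurableSet {y | p y}) (h : ∃ᵐ y ∂Measure.pi fun _ => μ, p y) :
    ∃ᵐ x ∂Measure.pi fun _ => Measure.pi fun _ : κ => μ, ∀ φ : Fin r → κ, p fun i => x i (φ i) := by
  induction r with
  | zero =>
    obtain ⟨y, hy⟩ := h.exists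
    have hall (x : Fin 0 → κ → α) (φ : Fin 0 → κ) : p fun i => x i (φ i) := by
      rwa [Subsingleton.elim (fun i => x i (φ i)) y]
    simp [hall, frequently_ae_iff]
  | succ r ih =>
    have hcons := (measurePreserving_fin_cons μ r).measurable
    have hswap : MeasurableSet {z : (Fin r → κ → α) × α |
        ∀ φ : Fin r → κ, p (Fin.cons z.2 fun i => z.1 i (φ i))} :=
      measurableSet_forall_comp hp fun φ => hcons.comp
        (measurable_snd.prodMk (measurable_pi_lambda _ fun i => by fun_prop))
    have hall : MeasurableSet {x : Fin (r + 1) → κ → α |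
        ∀ φ : Fin (r + 1) → κ, p fun i => x i (φ i)} :=
      measurableSet_forall_comp hp fun φ => by fun_prop
    have htail : ∃ᵐ x ∂Measure.pi fun _ => Measure.pi fun _ : κ => μ, ∃ᵐ a ∂μ,
        ∀ φ : Fin r → κ, p (Fin.cons a fun i => x i (φ i)) :=
      (frequently_frequently_comm hswap).2 <| ((frequently_pi_fin_succ hp).1 h).mono fun a ha =>
        ih (hcons.comp measurable_prodMk_left hp) ha
    rw [frequently_pi_fin_succ hall]
    refine (frequently_frequently_comm ?_).2 ?_
    · exact (measurePreserving_fin_cons (Measure.pi fun _ => μ) r).measurable hall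
    refine htail.mono fun x hx => (frequently_pi_forall (κ := κ) hx).mono fun a ha φ => ?_
    convert ha (φ 0) (Fin.tail φ) using 2 with i
    refine Fin.cases ?_ (fun i => ?_) i <;> rfl

end BlowUp

section RandomPoints

variable {W : ℝ → ℝ → ℝ} {r : ℕ}

theorem measurePreserving_pi_uncurry {ι κ κ' α : Type*} [Fintype ι] [Fintype κ] [Fintype κ']
    [MeasurableSpace α] (μ : Measure α) [SigmaFinite μ] (e : ι ≃ κ × κ') :
    MeasurePreserving (fun (x : κ → κ' → α) t => x (e t).1 (e t).2)
      (Measure.pi fun _ => Measure.pi fun _ => μ) (Measure.pi fun _ => μ) := by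
  have hmeas : Measurable fun (x : κ → κ' → α) t => x (e t).1 (e t).2 := by fun_prop
  refine ⟨hmeas, (Measure.pi_eq fun s hs => ?_).symm⟩
  have hpre : (fun (x : κ → κ' → α) t => x (e t).1 (e t).2) ⁻¹' univ.pi s =
      univ.pi fun i => univ.pi fun j => s (e.symm (i, j)) := by
    ext x
    simp [e.forall_congr_left, Prod.forall]
  rw [Measure.map_apply hmeas (.univ_pi hs), hpre]
  simp only [Measure.pi_pi]
  rw [← Fintype.prod_prod_type fun q => μ (s (e.symm q))]
  exact e.symm.prod_comp fun t => μ (s t)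

theorem IsCompatible.comap {U V : Type*} {x : V → ℝ} {F : SimpleGraph V}
    (h : IsCompatible W x F) (f : U ↪ V) : IsCompatible W (x ∘ f) (F.comap f) :=
  fun _ _ huv => h _ _ (f.injective.ne huv)

theorem ae_inAge_of_isCompatible_uncurry {Q : GraphClass} (hW : W ∈ limitSet Q) (r M : ℕ) :
    ∀ᵐ x ∂Measure.pi fun _ : Fin r => Measure.pi fun _ : Fin M => unitVolume,
      ∀ F, IsCompatible W (Function.uncurry x) F → InAge Q F := by
  have hmp := measurePreserving_pi_uncurry unitVolume (finProdFinEquiv (m := r) (n := M)).symm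
  filter_upwards [hmp.quasiMeasurePreserving.ae (ae_inAge_of_isCompatible hW (r * M))]
    with x hx F hF
  exact (hx _ (hF.comap finProdFinEquiv.symm.toEmbedding)).of_embedding
    (SimpleGraph.Iso.comap finProdFinEquiv.symm F).symm.toEmbedding

theorem measurableSet_forall_ne_mem_Ioo (hW : IsGraphon W) :
    MeasurableSet {y : Fin r → ℝ | ∀ i j, i ≠ j → W (y i) (y j) ∈ Ioo 0 1} := by
  simp only [ofPred_forall]
  exact .iInter fun i => .iInter fun j => .iInter fun _ =>
    measurable_kernel_eval hW.2.1 i j measurableSet_Ioo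

theorem frequently_forall_ne_mem_Ioo (hW : IsGraphon W) (h : ¬KFree r (randIndicator W)) :
    ∃ᵐ y ∂Measure.pi fun _ : Fin r => unitVolume, ∀ i j, i ≠ j → W (y i) (y j) ∈ Ioo 0 1 := by
  refine fun hnot => h ?_
  rw [KFree, volume_pi, Measure.restrict_pi_pi]
  filter_upwards [hnot] with y hy
  by_contra hprod
  refine hy ?_
  have hlt : ∀ i j, i < j → W (y i) (y j) ∈ Ioo 0 1 := fun i j hij => by
    have hfactor := Finset.prod_ne_zero_iff.1
      (Finset.prod_ne_zero_iff.1 hprod i (Finset.mem_univ i)) j (Finset.mem_univ j)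
    simpa [hij, randIndicator] using hfactor
  intro i j hij
  obtain hij | hji := hij.lt_or_gt
  · exact hlt i j hij
  · exact hW.1 (y j) (y i) ▸ hlt j i hji

theorem exists_points_forall_isCompatible_inAge {Q : GraphClass} (hW : W ∈ limitSet Q)
    (h : ¬KFree r (randIndicator W)) (M : ℕ) : ∃ x : Fin r → Fin M → ℝ,
      (∀ i j, i ≠ j → ∀ a b, W (x i a) (x j b) ∈ Ioo 0 1) ∧
        ∀ F, IsCompatible W (Function.uncurry x) F → InAge Q F := by
  obtain ⟨x, hx, hage⟩ := ((frequently_pi_pi_of_frequently_pi (κ := Fin M)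
    (measurableSet_forall_ne_mem_Ioo hW.1) (frequently_forall_ne_mem_Ioo hW.1 h)).and_eventually
      (ae_inAge_of_isCompatible_uncurry hW r M)).exists
  refine ⟨x, fun i j hij a b => ?_, hage⟩
  simpa [hij.symm] using hx (fun l => if l = i then a else b) i j hij

end RandomPoints

section BlockGraph

variable {ι κ : Type*} {c : ι → Prop} {H : κ → κ → Prop}

/-- The graph on `ι × κ` whose part `{i} × κ` is a clique if `c i` holds and an independent set
otherwise, and in which `H` describes the edges between any two different parts. -/
def blockGraph (c : ι → Prop) (H : κ → κ → Prop) : SimpleGraph (ι × κ) :=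
  .fromRel fun u v => (u.1 = v.1 ∧ c u.1) ∨ (u.1 ≠ v.1 ∧ H u.2 v.2)

theorem blockGraph_adj_same {i : ι} {a b : κ} :
    (blockGraph c H).Adj (i, a) (i, b) ↔ a ≠ b ∧ c i := by
  simp [blockGraph]

theorem blockGraph_adj_of_ne (hH : ∀ a b, H a b → H b a) {i j : ι} (hij : i ≠ j) {a b : κ} :
    (blockGraph c H).Adj (i, a) (j, b) ↔ H a b := by
  simpa [blockGraph, hij, hij.symm] using hH b a

theorem isCompatible_blockGraph {W : ℝ → ℝ → ℝ} {x : ι → κ → ℝ}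
    (hcross : ∀ i j, i ≠ j → ∀ a b, W (x i a) (x j b) ∈ Ioo 0 1)
    (hpart : ∀ i a b, a ≠ b → (W (x i a) (x i b) ≠ 0 ↔ c i)) :
    IsCompatible W (Function.uncurry x) (blockGraph c H) := by
  rintro ⟨i, a⟩ ⟨j, b⟩ hne
  obtain rfl | hij := eq_or_ne i j
  · have hab : a ≠ b := by simpa using hne
    simp only [blockGraph_adj_same, Function.uncurry]
    grind
  · obtain ⟨hpos, hlt⟩ := hcross i j hij a b
    exact ⟨fun _ => hpos.ne', fun _ => hlt.ne⟩

theorem exists_inAge_blockGraph {Q : GraphClass} {W : ℝ → ℝ → ℝ} (hW : W ∈ limitSet Q) {r m : ℕ}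
    (h : ¬KFree r (randIndicator W)) (H : Fin m → Fin m → Prop) :
    ∃ c : Fin r → Prop, InAge Q (blockGraph c H) := by
  obtain ⟨M, hM⟩ := exists_embedding_forall_adj_iff m
  obtain ⟨x, hcross, hage⟩ := exists_points_forall_isCompatible_inAge hW h M
  choose g c hgc using fun i => hM (.fromRel fun a b => W (x i a) (x i b) ≠ 0)
  have hpart (i : Fin r) (a b : Fin m) (hab : a ≠ b) : W (x i (g i a)) (x i (g i b)) ≠ 0 ↔ c i := by
    rw [← hgc i a b hab, SimpleGraph.fromRel_adj, hW.1.1 (x i (g i b)), or_self]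
    exact (and_iff_right ((g i).injective.ne hab)).symm
  let f : Fin r × Fin m ↪ Fin r × Fin M :=
    ⟨fun q => (q.1, g q.1 q.2), fun p q hpq => by
      obtain ⟨hfst, hsnd⟩ := Prod.ext_iff.1 hpq
      obtain ⟨i, a⟩ := p
      obtain ⟨j, b⟩ := q
      obtain rfl : i = j := hfst
      exact Prod.ext rfl ((g i).injective hsnd)⟩
  obtain ⟨F, hF, hcomap⟩ := IsCompatible.exists_comap_eq hW.1 (x := Function.uncurry x) (g := f)
    (isCompatible_blockGraph (x := fun i a => x i (g i a))
      (fun i j hij _ _ => hcross i j hij _ _) hpart)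
  exact ⟨c, hcomap ▸ (hage F hF).of_embedding (SimpleGraph.Embedding.comap f F)⟩

/-- Relabelling the parts turns an arbitrary set of clique parts into an initial segment. -/
theorem exists_blockGraph_embedding {r : ℕ} (c : Fin r → Prop) (H : κ → κ → Prop) :
    ∃ s ≤ r, Nonempty (blockGraph (fun i : Fin r => (i : ℕ) < s) H ↪g blockGraph c H) := by
  classical
  let s := Fintype.card {i // c i}
  have hs : s ≤ r := (Fintype.card_subtype_le c).trans_eq (Fintype.card_fin r)
  have hcard : Fintype.card {i : Fin r // (i : ℕ) < s} = Fintype.card {i // c i} := by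
    rw [Fintype.card_subtype, Fin.card_filter_val_lt, min_eq_right hs]
  let e₀ := Fintype.equivOfCardEq hcard
  let e := e₀.extendSubtype
  have he (i : Fin r) : c (e i) ↔ (i : ℕ) < s :=
    ⟨fun hi => of_not_not fun hlt => e₀.extendSubtype_not_mem i hlt hi,
      e₀.extendSubtype_mem i⟩
  exact ⟨s, hs, ⟨⟨⟨Prod.map e id, e.injective.prodMap Function.injective_id⟩,
    by simp [blockGraph, he]⟩⟩⟩

theorem exists_inAge_blockGraph_lt {Q : GraphClass} {W : ℝ → ℝ → ℝ} (hW : W ∈ limitSet Q) {r m : ℕ}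
    (h : ¬KFree r (randIndicator W)) (H : Fin m → Fin m → Prop) :
    ∃ s ≤ r, InAge Q (blockGraph (fun i : Fin r => (i : ℕ) < s) H) := by
  obtain ⟨c, hc⟩ := exists_inAge_blockGraph hW h H
  obtain ⟨s, hs, ⟨f⟩⟩ := exists_blockGraph_embedding c H
  exact ⟨s, hs, hc.of_embedding f⟩

end BlockGraph

section MatrixNorms

open scoped Matrix Kronecker Matrix.Norms.L2Operator

theorem exists_isSymm_isHadamard (d : ℕ) :
    ∃ A : Matrix (Fin (2 ^ d)) (Fin (2 ^ d)) ℝ, A.IsSymm ∧ A.IsHadamard := by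
  induction d with
  | zero =>
    have hone : (1 : Matrix (Fin 1) (Fin 1) ℝ).IsHadamard :=
      ⟨fun i j => by rw [Subsingleton.elim i j, Matrix.one_apply_eq]; exact one_mem _,
        by simp, by simp⟩
    exact ⟨1, Matrix.isSymm_one, hone⟩
  | succ d ih =>
    obtain ⟨A, hA_symm, hA⟩ := ih
    let S : Matrix (Fin 2) (Fin 2) ℝ := !![1, 1; 1, -1]
    have hS_symm : S.IsSymm := by ext i j; fin_cases i <;> fin_cases j <;> rfl
    have hS : S.IsHadamard := by
      refine .of_mul_conjTranspose (fun i j => Unitary.mem_iff_eq_one_or_eq_neg_one.2 ?_) ?_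
        (IsRegular.of_ne_zero (by norm_num))
      · fin_cases i <;> fin_cases j <;> simp [S]
      · ext i j
        fin_cases i <;> fin_cases j <;> norm_num [S, Matrix.mul_apply, Fin.sum_univ_two]
    have hAS_symm : (A ⊗ₖ S).IsSymm :=
      .ext fun i j => congrArg₂ (· * ·) (hA_symm.apply _ _) (hS_symm.apply _ _)
    exact ⟨Matrix.reindex finProdFinEquiv finProdFinEquiv (A ⊗ₖ S), hAS_symm.reindex _,
      (hA.kronecker hS).reindex _ _⟩

theorem norm_toLp_two_le {κ : Type*} [Fintype κ] {x : κ → ℝ} {δ : ℝ} (hx : ∀ a, |x a| ≤ δ)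
    (hδ : 0 ≤ δ) : ‖WithLp.toLp 2 x‖ ≤ √(Fintype.card κ) * δ := by
  rw [EuclideanSpace.norm_eq]
  refine Real.sqrt_le_iff.2 ⟨by positivity, ?_⟩
  rw [mul_pow, Real.sq_sqrt (by positivity)]
  refine (Finset.sum_le_card_nsmul _ _ (δ ^ 2) fun a _ => ?_).trans_eq (by simp)
  exact pow_le_pow_left₀ (norm_nonneg _) (hx a) 2

variable {κ : Type*} [Fintype κ] [DecidableEq κ]

theorem l2_opNorm_eq_sqrt_of_isHadamard {A : Matrix κ κ ℝ} (hA : A.IsHadamard) :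
    ‖A‖ = √(Fintype.card κ) := by
  rw [eq_comm, Real.sqrt_eq_iff_mul_self_eq (by positivity) (norm_nonneg A),
    ← Matrix.l2_opNorm_conjTranspose_mul_self, hA.conjTranspose_mul, Matrix.smul_one_eq_diagonal,
    Matrix.l2_opNorm_diagonal]
  obtain _ | _ := isEmpty_or_nonempty κ
  · rw [Subsingleton.elim (fun _ : κ => _) (0 : κ → ℝ)]; simp
  · simp

theorem abs_dotProduct_mulVec_le (B : Matrix κ κ ℝ) (x y : κ → ℝ) :
    |x ⬝ᵥ B *ᵥ y| ≤ ‖B‖ * ‖WithLp.toLp 2 x‖ * ‖WithLp.toLp 2 y‖ := by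
  calc |x ⬝ᵥ B *ᵥ y|
      = |inner ℝ (WithLp.toLp 2 (B *ᵥ y)) (WithLp.toLp 2 x)| := by
        rw [EuclideanSpace.inner_toLp_toLp, star_trivial]
    _ ≤ ‖WithLp.toLp 2 (B *ᵥ y)‖ * ‖WithLp.toLp 2 x‖ := abs_real_inner_le_norm _ _
    _ ≤ ‖B‖ * ‖WithLp.toLp 2 y‖ * ‖WithLp.toLp 2 x‖ := by
        gcongr
        exact B.l2_opNorm_mulVec (WithLp.toLp 2 y)
    _ = ‖B‖ * ‖WithLp.toLp 2 x‖ * ‖WithLp.toLp 2 y‖ := mul_right_comm _ _ _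

theorem abs_dotProduct_comp_mulVec_le {ι : Type*} [Fintype ι] {D : Matrix ι ι (Matrix κ κ ℝ)}
    {x y : ι × κ → ℝ} {C δ : ℝ} (hD : ∀ i j, ‖D i j‖ ≤ C) (hδ : 0 ≤ δ)
    (hx : ∀ u, |x u| ≤ δ) (hy : ∀ u, |y u| ≤ δ) :
    |x ⬝ᵥ Matrix.comp ι ι κ κ ℝ D *ᵥ y| ≤
      Fintype.card ι ^ 2 * (C * (Fintype.card κ * δ ^ 2)) := by
  let x' (i : ι) (a : κ) := x (i, a)
  let y' (j : ι) (b : κ) := y (j, b)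
  have hblocks : x ⬝ᵥ Matrix.comp ι ι κ κ ℝ D *ᵥ y = ∑ i, ∑ j, x' i ⬝ᵥ D i j *ᵥ y' j := by
    simp only [dotProduct, Matrix.mulVec, Matrix.comp_apply, Fintype.sum_prod_type,
      Finset.mul_sum, x', y']
    exact Finset.sum_congr rfl fun i _ => Finset.sum_comm
  have hblock (i j : ι) : |x' i ⬝ᵥ D i j *ᵥ y' j| ≤ C * (Fintype.card κ * δ ^ 2) :=
    calc |x' i ⬝ᵥ D i j *ᵥ y' j|
        ≤ ‖D i j‖ * ‖WithLp.toLp 2 (x' i)‖ * ‖WithLp.toLp 2 (y' j)‖ :=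
          abs_dotProduct_mulVec_le _ _ _
      _ ≤ C * (√(Fintype.card κ) * δ) * (√(Fintype.card κ) * δ) := by
          have hC : 0 ≤ C := (norm_nonneg _).trans (hD i j)
          gcongr
          · exact hD i j
          · exact norm_toLp_two_le (fun a => hx (i, a)) hδ
          · exact norm_toLp_two_le (fun b => hy (j, b)) hδ
      _ = C * (√(Fintype.card κ) ^ 2 * δ ^ 2) := by ring
      _ = C * (Fintype.card κ * δ ^ 2) := by rw [Real.sq_sqrt (Nat.cast_nonneg _)]
  calc |x ⬝ᵥ Matrix.comp ι ι κ κ ℝ D *ᵥ y|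
      ≤ ∑ i, ∑ j, |x' i ⬝ᵥ D i j *ᵥ y' j| := by
        rw [hblocks]
        exact (Finset.abs_sum_le_sum_abs _ _).trans
          (Finset.sum_le_sum fun i _ => Finset.abs_sum_le_sum_abs _ _)
    _ ≤ ∑ _i : ι, ∑ _j : ι, C * (Fintype.card κ * δ ^ 2) := by
        gcongr with i _ j _
        exact hblock i j
    _ = Fintype.card ι ^ 2 * (C * (Fintype.card κ * δ ^ 2)) := by
        simp only [Finset.sum_const, Finset.card_univ, nsmul_eq_mul]
        ring

end MatrixNorms

section StepKernels

open scoped Matrix Matrix.Norms.L2Operator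

variable {Ω : Type*} [MeasurableSpace Ω] {μ : Measure Ω} [IsFiniteMeasure μ]

theorem setIntegral_prod_eq_dotProduct_mulVec {ι : Type*} [Fintype ι] {P : ι → Set Ω}
    (hP : ∀ u, MeasurableSet (P u)) (hdisj : Pairwise (Function.onFun Disjoint P))
    (hcover : ∀ᵐ x ∂μ, ∃ u, x ∈ P u) {U : Ω → Ω → ℝ} {D : Matrix ι ι ℝ}
    (hU : ∀ u v, ∀ x ∈ P u, ∀ y ∈ P v, U x y = D u v) {S T : Set Ω} (hS : MeasurableSet S)
    (hT : MeasurableSet T) : ∫ p in S ×ˢ T, U p.1 p.2 ∂μ.prod μ =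
      (fun u => μ.real (S ∩ P u)) ⬝ᵥ D *ᵥ fun v => μ.real (T ∩ P v) := by
  let R (q : ι × ι) : Set (Ω × Ω) := (S ∩ P q.1) ×ˢ (T ∩ P q.2)
  have hR (q : ι × ι) : MeasurableSet (R q) := (hS.inter (hP q.1)).prod (hT.inter (hP q.2))
  have hUR (q : ι × ι) : EqOn (fun p : Ω × Ω => U p.1 p.2) (fun _ => D q.1 q.2) (R q) :=
    fun p hp => hU q.1 q.2 _ hp.1.2 _ hp.2.2
  have hR_disj : Pairwise (Function.onFun Disjoint R) := by
    intro q q' hne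
    rw [Function.onFun, Set.disjoint_prod]
    by_cases h : q.1 = q'.1
    · exact .inr ((hdisj fun h' => hne (Prod.ext h h')).mono inter_subset_right inter_subset_right)
    · exact .inl ((hdisj h).mono inter_subset_right inter_subset_right)
  have hST : S ×ˢ T =ᵐ[μ.prod μ] ⋃ q, R q := by
    filter_upwards [Measure.quasiMeasurePreserving_fst.ae hcover,
      Measure.quasiMeasurePreserving_snd.ae hcover] with p ⟨u, hu⟩ ⟨v, hv⟩
    refine propext ⟨fun hp => mem_iUnion.2 ⟨(u, v), ⟨hp.1, hu⟩, hp.2, hv⟩, fun hp => ?_⟩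
    obtain ⟨q, hq⟩ := mem_iUnion.1 hp
    exact ⟨hq.1.1, hq.2.1⟩
  calc ∫ p in S ×ˢ T, U p.1 p.2 ∂μ.prod μ
      = ∑ q, ∫ p in R q, U p.1 p.2 ∂μ.prod μ := by
        rw [setIntegral_congr_set hST, integral_iUnion_fintype hR hR_disj fun q =>
          (integrableOn_const (measure_ne_top _ _)).congr_fun (hUR q).symm (hR q)]
    _ = ∑ q : ι × ι, μ.real (S ∩ P q.1) * (D q.1 q.2 * μ.real (T ∩ P q.2)) := by
        refine Finset.sum_congr rfl fun q _ => ?_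
        rw [setIntegral_congr_fun (hR q) (hUR q), setIntegral_const, measureReal_prod_prod,
          smul_eq_mul, mul_assoc, mul_comm (μ.real (T ∩ P q.2))]
    _ = _ := by
        simp only [dotProduct, Matrix.mulVec, Finset.mul_sum, Fintype.sum_prod_type]

theorem cutNormLE_of_forall_l2_opNorm_le {ι κ : Type*} [Fintype ι] [Fintype κ] [DecidableEq κ]
    {P : ι × κ → Set Ω} (hP : ∀ u, MeasurableSet (P u))
    (hdisj : Pairwise (Function.onFun Disjoint P)) (hcover : ∀ᵐ x ∂μ, ∃ u, x ∈ P u)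
    {U : Ω → Ω → ℝ} {D : Matrix ι ι (Matrix κ κ ℝ)}
    (hU : ∀ u v, ∀ x ∈ P u, ∀ y ∈ P v, U x y = D u.1 v.1 u.2 v.2) {C δ : ℝ}
    (hD : ∀ i j, ‖D i j‖ ≤ C) (hδ : 0 ≤ δ) (hPδ : ∀ u, μ.real (P u) ≤ δ) :
    CutNormLE μ U (Fintype.card ι ^ 2 * (C * (Fintype.card κ * δ ^ 2))) := by
  intro S T hS hT
  have hmass (S : Set Ω) (u : ι × κ) : |μ.real (S ∩ P u)| ≤ δ := by
    rw [abs_of_nonneg measureReal_nonneg]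
    exact (measureReal_mono inter_subset_right).trans (hPδ u)
  rw [setIntegral_prod_eq_dotProduct_mulVec (D := Matrix.comp ι ι κ κ ℝ D) hP hdisj hcover hU hS hT]
  exact abs_dotProduct_comp_mulVec_le hD hδ (hmass S) (hmass T)

theorem cutNorm_le_of_cutNormLE {D : ℝ → ℝ → ℝ} {ε : ℝ} (hD : CutNormLE unitVolume D ε) :
    cutNorm D ≤ ε := by
  refine csSup_le ⟨_, ∅, ∅, .empty, .empty, empty_subset _, empty_subset _, rfl⟩ ?_
  rintro _ ⟨S, T, hS, hT, hS01, hT01, rfl⟩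
  simpa only [setIntegral_prod_unitVolume D hS hT, inter_eq_left.2 hS01, inter_eq_left.2 hT01]
    using hD S T hS hT

end StepKernels

section HadamardBlocks

open scoped Matrix.Norms.L2Operator

/-- The values, blockwise, of `W_G - W^{(r,s)}` when `G` is the block graph with `r` parts, of which
the first `s` are cliques, and with `{A = -1}` as the graph between different parts. -/
def hadamardBlocks {r N : ℕ} (s : ℕ) (A : Matrix (Fin N) (Fin N) ℝ) :
    Matrix (Fin r) (Fin r) (Matrix (Fin N) (Fin N) ℝ) :=
  .of fun i j => if i = j then if (i : ℕ) < s then -1 else 0 else (-1 / 2 : ℝ) • A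

theorem isGraphon_Wrs (r s : ℕ) : IsGraphon (Wrs r s) := by
  refine ⟨fun x y => ?_, ?_, fun x y => ?_⟩
  · refine if_congr ?_ rfl (if_congr ?_ rfl rfl)
    · rw [exists_comm]
      simp only [ne_comm, and_comm (a := x ∈ _)]
    · simp only [and_comm (a := x ∈ _)]
  · have hrect (i j : Fin r) : MeasurableSet {p : ℝ × ℝ | p.1 ∈ cell r i ∧ p.2 ∈ cell r j} :=
      (measurableSet_cell r i).prod (measurableSet_cell r j)
    refine Measurable.ite ?_ measurable_const (Measurable.ite ?_ measurable_const measurable_const)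
    · simp only [ofPred_exists]
      exact .iUnion fun i => .iUnion fun j => (MeasurableSet.const _).inter (hrect i j)
    · simp only [ofPred_exists]
      exact .iUnion fun i => (MeasurableSet.const _).inter (hrect i i)
  · unfold Wrs
    split_ifs <;> norm_num

theorem Wrs_of_mem_cell {r : ℕ} (s : ℕ) {i j : Fin r} {x y : ℝ} (hx : x ∈ cell r i)
    (hy : y ∈ cell r j) : Wrs r s x y = if i = j then if (i : ℕ) < s then 1 else 0 else 1 / 2 := by
  have hindex {k l : Fin r} {z : ℝ} (hk : z ∈ cell r k) : z ∈ cell r l ↔ l = k :=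
    ⟨fun hl => Fin.ext (eq_of_mem_cell k.pos hl hk), fun h => h ▸ hk⟩
  have hoff : (∃ k l : Fin r, k ≠ l ∧ x ∈ cell r k ∧ y ∈ cell r l) ↔ i ≠ j := by
    simp only [hindex hx, hindex hy]
    exact ⟨fun ⟨_, _, h, hk, hl⟩ => hk ▸ hl ▸ h, fun h => ⟨i, j, h, rfl, rfl⟩⟩
  have hon : (∃ k : Fin r, (k : ℕ) < s ∧ x ∈ cell r k ∧ y ∈ cell r k) ↔ (i : ℕ) < s ∧ i = j := by
    simp only [hindex hx, hindex hy]
    grind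
  calc Wrs r s x y = if i ≠ j then 1 / 2 else if (i : ℕ) < s ∧ i = j then 1 else 0 :=
        if_congr hoff rfl (if_congr hon rfl rfl)
    _ = _ := by grind

theorem volume_real_cell (n v : ℕ) : volume.real (cell n v) = 1 / n := by
  rw [cell, Real.volume_real_Ioc_of_le (by gcongr; simp)]
  ring

theorem cell_mul_subset {r N : ℕ} (i : Fin r) (a : Fin N) :
    cell (r * N) (finProdFinEquiv (i, a)) ⊆ cell r i := by
  have hr : (0 : ℝ) < r := Nat.cast_pos.2 i.pos
  have hN : (0 : ℝ) < N := Nat.cast_pos.2 a.pos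
  have ha : (a : ℝ) + 1 ≤ N := mod_cast a.2
  refine Ioc_subset_Ioc ?_ ?_
  · rw [finProdFinEquiv_apply_val]
    push_cast
    rw [div_le_div_iff₀ hr (by positivity)]
    have : 0 ≤ (a : ℝ) * r := by positivity
    linarith
  · rw [finProdFinEquiv_apply_val]
    push_cast
    rw [div_le_div_iff₀ (by positivity) hr]
    nlinarith

theorem graphonOfGraph_blockGraph_sub_Wrs {r N s : ℕ} {A : Matrix (Fin N) (Fin N) ℝ}
    (hsymm : A.IsSymm) (hA : ∀ a b, A a b = 1 ∨ A a b = -1) {u v : Fin r × Fin N} {x y : ℝ}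
    (hx : x ∈ cell (r * N) (finProdFinEquiv u)) (hy : y ∈ cell (r * N) (finProdFinEquiv v)) :
    graphonOfGraph ((blockGraph (fun i : Fin r => (i : ℕ) < s) (fun a b => A a b = -1)).comap
      finProdFinEquiv.symm) x y - Wrs r s x y = hadamardBlocks s A u.1 v.1 u.2 v.2 := by
  obtain ⟨i, a⟩ := u
  obtain ⟨j, b⟩ := v
  have hH (a b : Fin N) (h : A a b = -1) : A b a = -1 := (hsymm.apply a b).trans h
  rw [graphonOfGraph_of_mem_cell _ hx hy, SimpleGraph.comap_adj, Equiv.symm_apply_apply,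
    Equiv.symm_apply_apply, Wrs_of_mem_cell s (cell_mul_subset i a hx) (cell_mul_subset j b hy),
    hadamardBlocks, Matrix.of_apply]
  obtain rfl | hij := eq_or_ne i j
  · rw [blockGraph_adj_same]
    obtain rfl | hab := eq_or_ne a b <;> by_cases his : (i : ℕ) < s <;> simp [*]
  · rw [blockGraph_adj_of_ne hH hij, if_neg hij, if_neg hij]
    obtain h | h := hA a b <;> norm_num [h]

theorem l2_opNorm_hadamardBlocks_le {r N s : ℕ} (hN : 0 < N) {A : Matrix (Fin N) (Fin N) ℝ}
    (hA : A.IsHadamard) (i j : Fin r) : ‖hadamardBlocks s A i j‖ ≤ √N := by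
  have hA_norm : ‖A‖ = √N := by rw [l2_opNorm_eq_sqrt_of_isHadamard hA, Fintype.card_fin]
  simp only [hadamardBlocks, Matrix.of_apply]
  split_ifs
  · have : Nonempty (Fin N) := ⟨⟨0, hN⟩⟩
    rw [norm_neg, ← Matrix.diagonal_one, Matrix.l2_opNorm_diagonal, pi_norm_const, norm_one]
    exact Real.one_le_sqrt.2 (Nat.one_le_cast.2 hN)
  · simp
  · rw [norm_smul, hA_norm]
    norm_num
    linarith [Real.sqrt_nonneg N]

theorem dCut_blockGraph_Wrs_le {r N : ℕ} (hr : 0 < r) (hN : 0 < N) (s : ℕ)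
    {A : Matrix (Fin N) (Fin N) ℝ} (hsymm : A.IsSymm) (hA : A.IsHadamard) :
    dCut (graphonOfGraph ((blockGraph (fun i : Fin r => (i : ℕ) < s) (fun a b => A a b = -1)).comap
      finProdFinEquiv.symm)) (Wrs r s) ≤ 1 / √N := by
  have hrN : 0 < r * N := Nat.mul_pos hr hN
  let P (u : Fin r × Fin N) : Set ℝ := cell (r * N) (finProdFinEquiv u)
  have hP_disj : Pairwise (Function.onFun Disjoint P) := fun u v huv =>
    Set.disjoint_left.2 fun x hu hv =>
      huv (finProdFinEquiv.injective (Fin.ext (eq_of_mem_cell hrN hu hv)))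
  have hP_cover : ∀ᵐ x ∂unitVolume, ∃ u, x ∈ P u := by
    filter_upwards [ae_unitVolume_mem_Ioc] with x hx
    obtain ⟨v, hv⟩ := exists_mem_cell hrN hx
    exact ⟨finProdFinEquiv.symm v, by rwa [← finProdFinEquiv.apply_symm_apply v] at hv⟩
  have hP_mass (u : Fin r × Fin N) : unitVolume.real (P u) ≤ 1 / (r * N : ℕ) :=
    (ENNReal.toReal_mono measure_Ioc_lt_top.ne (Measure.restrict_apply_le _ _)).trans_eq
      (volume_real_cell _ _)
  have hcut := cutNormLE_of_forall_l2_opNorm_le (fun _ => measurableSet_cell _ _) hP_disj hP_cover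
    (fun u v x hx y hy => graphonOfGraph_blockGraph_sub_Wrs (s := s) hsymm
      (fun a b => Unitary.mem_iff_eq_one_or_eq_neg_one.1 (hA.apply_mem a b)) hx hy)
    (l2_opNorm_hadamardBlocks_le hN hA) (by positivity) hP_mass
  refine (cutNorm_le_of_cutNormLE hcut).trans_eq ?_
  rw [Fintype.card_fin, Fintype.card_fin, Nat.cast_mul]
  field_simp
  exact Real.sq_sqrt (Nat.cast_nonneg N)

end HadamardBlocks

theorem exists_mem_limitSet {ι : Type*} [Finite ι] {Q : GraphClass} {W : ι → ℝ → ℝ → ℝ}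
    (hW : ∀ i, IsGraphon (W i)) {n : ℕ → ℕ} (hn : Tendsto n atTop atTop) {ε : ℕ → ℝ}
    (hε : Tendsto ε atTop (nhds 0))
    (happrox : ∀ k, ∃ i, ∃ G ∈ Q (n k), deltaCut (graphonOfGraph G) (W i) ≤ ε k) :
    ∃ i, W i ∈ limitSet Q := by
  choose i G hGQ hG using happrox
  obtain ⟨i₀, hi₀⟩ := Finite.exists_infinite_fiber i
  obtain ⟨φ, hφ, hφi⟩ := extraction_of_frequently_atTop
    (Nat.frequently_atTop_iff_infinite.2 (Set.infinite_coe_iff.1 hi₀))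
  refine ⟨i₀, hW i₀, n ∘ φ, fun k => G (φ k), fun k => hGQ _, hn.comp hφ.tendsto_atTop, ?_⟩
  refine squeeze_zero (fun k => deltaCut_nonneg _ _) (fun k => ?_) (hε.comp hφ.tendsto_atTop)
  obtain rfl : i (φ k) = i₀ := hφi k
  exact hG (φ k)

/-- Lemma 7.2: if `Q` is hereditary and some `W ∈ Q̂` has a randomness
support graphon that is not `K_r`-free, then `W^{(r,s)} ∈ Q̂` for some `s ≤ r`. -/
theorem stmt14 (Q : GraphClass) (hQ : IsHereditary Q) (r : ℕ) (hr : 1 ≤ r)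
    (W : ℝ → ℝ → ℝ) (hWQ : W ∈ limitSet Q)
    (hnotfree : ¬ KFree r (randIndicator W)) :
    ∃ s : ℕ, s ≤ r ∧ Wrs r s ∈ limitSet Q := by
  have happrox (d : ℕ) : ∃ s : Fin (r + 1), ∃ G ∈ Q (r * 2 ^ d),
      deltaCut (graphonOfGraph G) (Wrs r s) ≤ 1 / √(2 ^ d : ℕ) := by
    obtain ⟨A, hA_symm, hA⟩ := exists_isSymm_isHadamard d
    obtain ⟨s, hs, hage⟩ := exists_inAge_blockGraph_lt hWQ hnotfree fun a b => A a b = -1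
    refine ⟨⟨s, Nat.lt_succ_of_le hs⟩, _, hQ.mem_of_inAge (hage.of_embedding
      (SimpleGraph.Embedding.comap finProdFinEquiv.symm.toEmbedding _)), ?_⟩
    exact (deltaCut_le_dCut _ _).trans (dCut_blockGraph_Wrs_le hr (by positivity) s hA_symm hA)
  have hpow : Tendsto (fun d => 2 ^ d) atTop atTop :=
    tendsto_pow_atTop_atTop_of_one_lt one_lt_two
  have hsize : Tendsto (fun d => r * 2 ^ d) atTop atTop := hpow.const_mul_atTop' hr
  have herror : Tendsto (fun d => 1 / √(2 ^ d : ℕ)) atTop (nhds 0) :=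
    tendsto_const_nhds.div_atTop
      (Real.tendsto_sqrt_atTop.comp (tendsto_natCast_atTop_atTop.comp hpow))
  obtain ⟨s, hs⟩ := exists_mem_limitSet (fun s : Fin (r + 1) => isGraphon_Wrs r s) hsize herror
    happrox
  exact ⟨s, Nat.le_of_lt_succ s.2, hs⟩

end
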